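/- arXiv:2209.13597 — 4 statements merged into one kernel-verified Lean document; each statement's English description precedes it below -/
import Mathlib

section
/- (Eckart–Young theorem) Let A be a real n×p matrix with singular value decomposition A = UΣVᵀ, where the singular values satisfy σ_1 ≥ σ_2 ≥ … ≥ σ_p ≥ 0. For every integer r with 0 < r < p and every real n×p matrix B with rank B ≤ r, one has ‖A − B‖² ≥ σ_{r+1}² + … + σ_p² (Frobenius norm), and equality holds for A_r = UΣ_rVᵀ, where Σ_r is obtained from Σ by setting to zero all singular values beyond the r-th. Hence A_r is a best rank-r approximation of A in Frobenius norm. -/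
/-!
The lower bound projects onto the kernel of `B`. Let `Q` be the matrix of the orthogonal projection
onto `ker B`, so that `B Q = 0` and `tr Q = p - rank B ≥ p - r` (`exists_kernel_projection`).
Right multiplication by `Q` does not increase the Frobenius norm
(`trace_mul_projection_le`), hence
`‖A - B‖² ≥ ‖(A - B) Q‖² = ‖A Q‖² = tr (AᵀA Q) = ∑ j, σ j ^ 2 * c j`,
where the `c j` are the diagonal entries of `Vᵀ Q V`. This matrix is again an orthogonal projection,
so `0 ≤ c j ≤ 1` (`projection_diag_mem`), while `∑ j, c j = tr Q ≥ p - r`. As `σ` is nonincreasing,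
the weighted sum is smallest when the weight sits on the last `p - r` indices, which gives the tail
sum (`tail_le_weighted_sum`).

For the equality case, `A - A_r = U (Σ - Σ_r) Vᵀ`, and multiplying by `U` and `Vᵀ` preserves the
Frobenius norm.
-/

open Matrix BigOperators

/-- The squared Frobenius norm as a trace. -/
lemma sum_sq_eq_trace {n p : ℕ} (M : Matrix (Fin n) (Fin p) ℝ) :
    ∑ i, ∑ j, M i j ^ 2 = (Mᵀ * M).trace := by
  simp only [Matrix.trace, Matrix.diag, Matrix.mul_apply, Matrix.transpose_apply]
  rw [Finset.sum_comm]
  simp only [sq]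

/-- The orthogonal projection onto `ker B`, built from an eigenbasis of `Bᵀ * B` by keeping the
eigenvectors of eigenvalue zero. -/
lemma exists_kernel_projection {n p : ℕ} (B : Matrix (Fin n) (Fin p) ℝ) :
    ∃ Q : Matrix (Fin p) (Fin p) ℝ, Qᵀ = Q ∧ Q * Q = Q ∧ B * Q = 0 ∧
      Q.trace + B.rank = p := by
  have hH : (Bᵀ * B).IsHermitian := by
    simpa using Matrix.isHermitian_conjTranspose_mul_self B
  obtain ⟨E, hE, hS⟩ : ∃ E : Matrix (Fin p) (Fin p) ℝ, Eᵀ * E = 1 ∧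
      Bᵀ * B = E * Matrix.diagonal hH.eigenvalues * Eᵀ := by
    refine ⟨hH.eigenvectorUnitary, ?_, ?_⟩
    · have := Unitary.coe_star_mul_self hH.eigenvectorUnitary
      simpa [Matrix.star_eq_conjTranspose] using this
    · have := hH.spectral_theorem
      rw [Unitary.conjStarAlgAut_apply] at this
      simpa [Matrix.star_eq_conjTranspose, Function.comp_def] using this
  have hrank := hH.rank_eq_card_non_zero_eigs
  rw [Matrix.rank_transpose_mul_self] at hrank
  set l := hH.eigenvalues
  set d : Fin p → ℝ := fun i => if l i = 0 then 1 else 0 with hd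
  have hconj : ∀ a b : Fin p → ℝ,
      (E * Matrix.diagonal a * Eᵀ) * (E * Matrix.diagonal b * Eᵀ) =
        E * Matrix.diagonal (fun i => a i * b i) * Eᵀ := by
    intro a b
    calc _ = E * Matrix.diagonal a * (Eᵀ * E) * Matrix.diagonal b * Eᵀ := by
          simp only [Matrix.mul_assoc]
      _ = _ := by
          rw [hE, Matrix.mul_one, Matrix.mul_assoc E, Matrix.diagonal_mul_diagonal]
  refine ⟨E * Matrix.diagonal d * Eᵀ, ?_, ?_, ?_, ?_⟩
  · simp [Matrix.transpose_mul, Matrix.mul_assoc]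
  · have hdd : (fun i => d i * d i) = d := by
      funext i; by_cases h : l i = 0 <;> simp [hd, h]
    rw [hconj, hdd]
  · have h0 : (Bᴴ * B) * (E * Matrix.diagonal d * Eᵀ) = 0 := by
      have hz : (fun i => l i * d i) = fun _ => 0 := by
        funext i; by_cases h : l i = 0 <;> simp [hd, h]
      rw [Matrix.conjTranspose_eq_transpose_of_trivial, hS, hconj, hz]
      simp
    exact (Matrix.conjTranspose_mul_self_mul_eq_zero _ _).1 h0
  · rw [Matrix.trace_mul_comm, ← Matrix.mul_assoc, hE, Matrix.one_mul, Matrix.trace_diagonal,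
      hrank, Fintype.card_subtype, hd, Finset.sum_boole]
    have := Finset.card_filter_add_card_filter_not (s := (Finset.univ : Finset (Fin p)))
      (fun i => l i = 0)
    rw [Finset.card_univ, Fintype.card_fin] at this
    exact_mod_cast this

/-- For an orthogonal projection `Q`, this says `‖M Q‖² ≤ ‖M‖²`; the difference of the two sides
is `‖M (1 - Q)‖²`. -/
lemma trace_mul_projection_le {n p : ℕ} (M : Matrix (Fin n) (Fin p) ℝ)
    (Q : Matrix (Fin p) (Fin p) ℝ) (hQ : Qᵀ = Q) (hQQ : Q * Q = Q) :
    ((M * Q)ᵀ * (M * Q)).trace ≤ (Mᵀ * M).trace := by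
  have h0 : 0 ≤ ((M - M * Q)ᵀ * (M - M * Q)).trace := by
    rw [← sum_sq_eq_trace]
    positivity
  have h1 : (M - M * Q)ᵀ * (M - M * Q) =
      Mᵀ * M - Mᵀ * (M * Q) - (M * Q)ᵀ * M + (M * Q)ᵀ * (M * Q) := by
    rw [Matrix.transpose_sub, Matrix.sub_mul, Matrix.mul_sub, Matrix.mul_sub]
    abel
  have h2 : ((M * Q)ᵀ * M).trace = ((M * Q)ᵀ * (M * Q)).trace := by
    rw [← Matrix.mul_assoc _ M Q, Matrix.trace_mul_comm _ Q, Matrix.transpose_mul, hQ,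
      ← Matrix.mul_assoc, ← Matrix.mul_assoc, hQQ]
  have h3 : (Mᵀ * (M * Q)).trace = ((M * Q)ᵀ * M).trace := by
    rw [← Matrix.trace_transpose, Matrix.transpose_mul, Matrix.transpose_transpose]
  rw [h1, Matrix.trace_add, Matrix.trace_sub, Matrix.trace_sub, h3, h2] at h0
  linarith

lemma projection_diag_mem {p : ℕ} (P : Matrix (Fin p) (Fin p) ℝ) (hP : Pᵀ = P) (hPP : P * P = P)
    (j : Fin p) : 0 ≤ P j j ∧ P j j ≤ 1 := by
  -- The `j`-th diagonal entry is the squared norm of the `j`-th row, so it dominates its square.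
  have h : P j j = ∑ k, P j k ^ 2 := by
    conv_lhs => rw [← hPP, Matrix.mul_apply]
    refine Finset.sum_congr rfl fun k _ => ?_
    rw [sq, ← congrFun (congrFun hP k) j, Matrix.transpose_apply]
  have h2 : P j j ^ 2 ≤ P j j := by
    conv_rhs => rw [h]
    exact Finset.single_le_sum (f := fun k => P j k ^ 2) (fun k _ => sq_nonneg _)
      (Finset.mem_univ j)
  constructor <;> nlinarith

/-- Among weights in `[0, 1]` of total mass at least `p - r`, a nonincreasing nonnegative sequence
has the smallest weighted sum when the mass sits on the indices `r, …, p - 1`. -/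
lemma tail_le_weighted_sum {p r : ℕ} (hrp : r < p) (s c : Fin p → ℝ) (hs : ∀ j, 0 ≤ s j)
    (hmono : ∀ j k : Fin p, j ≤ k → s k ≤ s j) (hc : ∀ j, 0 ≤ c j ∧ c j ≤ 1)
    (hsum : (p : ℝ) ≤ ∑ j, c j + r) :
    ∑ j ∈ Finset.univ.filter (fun j : Fin p => r ≤ (j : ℕ)), s j ≤ ∑ j, s j * c j := by
  have hcount : (∑ j : Fin p, if r ≤ (j : ℕ) then (1 : ℝ) else 0) = p - r := by
    rw [Fin.sum_univ_eq_sum_range (fun j => if r ≤ j then (1 : ℝ) else 0) p,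
      ← Finset.sum_range_add_sum_Ico _ hrp.le, Finset.sum_eq_zero,
      Finset.sum_congr rfl (g := fun _ => (1 : ℝ))]
    · simp [Nat.cast_sub hrp.le]
    · intro j hj
      simp [(Finset.mem_Ico.1 hj).1]
    · intro j hj
      simpa using hj
  set t := s ⟨r, hrp⟩ with ht
  -- `s j - t` and `c j - [r ≤ j]` are both nonnegative for `j < r` and both nonpositive otherwise.
  have key : ∀ j : Fin p, t * (c j - if r ≤ (j : ℕ) then 1 else 0) ≤
      s j * c j - if r ≤ (j : ℕ) then s j else 0 := by
    intro j
    obtain ⟨h0, h1⟩ := hc j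
    split_ifs with h
    · have := hmono ⟨r, hrp⟩ j h
      nlinarith
    · have := hmono j ⟨r, hrp⟩ (le_of_lt (not_le.1 h))
      nlinarith
  have := Finset.sum_le_sum fun j (_ : j ∈ Finset.univ) => key j
  rw [← Finset.mul_sum, Finset.sum_sub_distrib, Finset.sum_sub_distrib, hcount] at this
  rw [Finset.sum_filter]
  have h2 : 0 ≤ t * (∑ j, c j - (p - r)) := mul_nonneg (hs _) (by linarith)
  linarith

/-- The Gram matrix of `U * diagonal d * Vᵀ`, where the columns of `U` are orthonormal. -/
lemma gram_eq {n p : ℕ} (U : Matrix (Fin n) (Fin p) ℝ) (V : Matrix (Fin p) (Fin p) ℝ)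
    (hU : Uᵀ * U = 1) (d : Fin p → ℝ) :
    (U * Matrix.diagonal d * Vᵀ)ᵀ * (U * Matrix.diagonal d * Vᵀ) =
      V * Matrix.diagonal (fun j => d j ^ 2) * Vᵀ := by
  calc _ = V * (Matrix.diagonal d * (Uᵀ * U) * Matrix.diagonal d) * Vᵀ := by
        simp only [Matrix.transpose_mul, Matrix.transpose_transpose, Matrix.diagonal_transpose,
          Matrix.mul_assoc]
    _ = _ := by
        rw [hU, Matrix.mul_one, Matrix.diagonal_mul_diagonal]
        simp only [sq]

/-- Eckart–Young theorem: if `A = U Σ Vᵀ` is an SVD of `A` with nonincreasing nonnegative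
singular values `σ`, then for every `B` of rank at most `r`,
`‖A − B‖² ≥ σ_{r+1}² + … + σ_p²` (Frobenius norm), and equality is attained by
`A_r = U Σ_r Vᵀ` where `Σ_r` zeroes out all singular values beyond the `r`-th; `A_r` has
rank at most `r`, hence is a best rank-`r` approximation of `A`. -/
theorem stmt1 (n p : ℕ) (A U : Matrix (Fin n) (Fin p) ℝ) (V : Matrix (Fin p) (Fin p) ℝ)
    (σ : Fin p → ℝ)
    (hU : Uᵀ * U = 1) (hV : Vᵀ * V = 1) (hV' : V * Vᵀ = 1)
    (hσ0 : ∀ j, 0 ≤ σ j) (hσmono : ∀ j k : Fin p, j ≤ k → σ k ≤ σ j)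
    (hA : A = U * Matrix.diagonal σ * Vᵀ)
    (r : ℕ) (hr0 : 0 < r) (hrp : r < p) :
    (∀ B : Matrix (Fin n) (Fin p) ℝ, B.rank ≤ r →
      (∑ j ∈ Finset.univ.filter (fun j : Fin p => r ≤ (j : ℕ)), σ j ^ 2) ≤
        ∑ i, ∑ j, (A i j - B i j) ^ 2) ∧
    ((U * Matrix.diagonal (fun j : Fin p => if (j : ℕ) < r then σ j else 0) * Vᵀ).rank ≤ r ∧
      ∑ i, ∑ j,
          (A i j - (U * Matrix.diagonal (fun j : Fin p => if (j : ℕ) < r then σ j else 0) * Vᵀ) i j) ^ 2 =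
        ∑ j ∈ Finset.univ.filter (fun j : Fin p => r ≤ (j : ℕ)), σ j ^ 2) := by
  refine ⟨fun B hB => ?_, ?_, ?_⟩
  · obtain ⟨Q, hQ, hQQ, hBQ, hQt⟩ := exists_kernel_projection B
    have h1 := trace_mul_projection_le (A - B) Q hQ hQQ
    rw [← sum_sq_eq_trace (A - B), Matrix.sub_mul, hBQ, sub_zero] at h1
    simp only [Matrix.sub_apply] at h1
    refine le_trans ?_ h1
    have h2 : ((A * Q)ᵀ * (A * Q)).trace = ∑ j, σ j ^ 2 * (Vᵀ * Q * V) j j := by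
      calc ((A * Q)ᵀ * (A * Q)).trace = (Q * (Aᵀ * A * Q)).trace := by
            rw [Matrix.transpose_mul, hQ]
            simp only [Matrix.mul_assoc]
        _ = (Aᵀ * A * Q).trace := by
            rw [Matrix.trace_mul_comm, Matrix.mul_assoc _ Q Q, hQQ]
        _ = (V * (Matrix.diagonal (fun j => σ j ^ 2) * Vᵀ * Q)).trace := by
            rw [hA, gram_eq U V hU]
            simp only [Matrix.mul_assoc]
        _ = (Matrix.diagonal (fun j => σ j ^ 2) * (Vᵀ * Q * V)).trace := by
            rw [Matrix.trace_mul_comm]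
            simp only [Matrix.mul_assoc]
        _ = _ := by simp only [Matrix.trace, Matrix.diag, Matrix.diagonal_mul]
    rw [h2]
    refine tail_le_weighted_sum hrp (fun j => σ j ^ 2) _ (fun j => sq_nonneg _)
      (fun j k hjk => pow_le_pow_left₀ (hσ0 k) (hσmono j k hjk) 2)
      (projection_diag_mem _ ?_ ?_) ?_
    · simp only [Matrix.transpose_mul, Matrix.transpose_transpose, hQ, Matrix.mul_assoc]
    · calc Vᵀ * Q * V * (Vᵀ * Q * V) = Vᵀ * (Q * (V * Vᵀ) * Q) * V := by
            simp only [Matrix.mul_assoc]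
        _ = _ := by rw [hV', Matrix.mul_one, hQQ]
    · have h3 : ∑ j, (Vᵀ * Q * V) j j = Q.trace := by
        change (Vᵀ * Q * V).trace = _
        rw [Matrix.trace_mul_comm, ← Matrix.mul_assoc, hV', Matrix.one_mul]
      have h4 : (B.rank : ℝ) ≤ r := by exact_mod_cast hB
      rw [h3]
      linarith
  · refine (Matrix.rank_mul_le_left _ _).trans ((Matrix.rank_mul_le_right _ _).trans ?_)
    rw [Matrix.rank_diagonal, Fintype.card_subtype]
    calc _ ≤ (Finset.univ.filter fun j : Fin p => (j : ℕ) < r).card := by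
          refine Finset.card_le_card fun j hj => ?_
          simp only [Finset.mem_filter, Finset.mem_univ, true_and] at hj ⊢
          by_contra h
          exact hj (if_neg h)
      _ ≤ (Finset.range r).card :=
          Finset.card_le_card_of_injOn (fun j => (j : ℕ)) (fun j hj => by simpa using hj)
            (fun _ _ _ _ h => Fin.ext h)
      _ = r := Finset.card_range r
  · have h1 : A - U * Matrix.diagonal (fun j : Fin p => if (j : ℕ) < r then σ j else 0) * Vᵀ =
        U * Matrix.diagonal (fun j : Fin p => if r ≤ (j : ℕ) then σ j else 0) * Vᵀ := by
      rw [hA, ← Matrix.sub_mul, ← Matrix.mul_sub, Matrix.diagonal_sub]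
      congr 3
      funext j
      by_cases h : (j : ℕ) < r
      · simp [h]
      · simp [h, not_lt.1 h]
    simp only [← Matrix.sub_apply]
    rw [sum_sq_eq_trace, h1, gram_eq U V hU, Matrix.trace_mul_comm, ← Matrix.mul_assoc, hV,
      Matrix.one_mul, Matrix.trace_diagonal, Finset.sum_filter]
    refine Finset.sum_congr rfl fun j _ => ?_
    split_ifs <;> simp
end

section
/- (Johnson–Lindenstrauss lemma) Let 0 < ε < 1 and let X be a set of n points in ℝ^d. If k is an integer with k ≥ 8 (log n)/ε², then there exists a map f : ℝ^d → ℝ^k such that for all x, y ∈ X, (1 − ε)‖x − y‖² ≤ ‖f(x) − f(y)‖² ≤ (1 + ε)‖x − y‖². -/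
/-!
Project by a random Gaussian matrix: with `G i` independent standard Gaussian vectors and `u` a
unit vector, `S = ∑ i, ⟪u, G i⟫ ^ 2` is chi-square with `k` degrees of freedom, and the optimal
Chernoff weight `exp (chernoff a * (S - k * a))` has expectation `exp (-k * (a - 1 - log a) / 2)`
(`integral_chernoff_weight`).

With the usual normalisation of `S` by `k`, the upper tail is too heavy to give the constant `8`.
It is instead divided by `k * c` with `c = artanh ε / ε`, which makes the exponents at
`a = c * (1 + ε)` and `a = c * (1 - ε)` equal:
`a - 1 - log a = (c - 1 - log c) - log (1 - ε ^ 2) / 2 ≥ ε ^ 2 / 2`.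
So each weight has expectation at most `exp (-k * ε ^ 2 / 4) ≤ n⁻²`. The sum of both weights over
all ordered pairs of distinct points has expectation at most `2 * n * (n - 1) / n ^ 2 < 2`, hence
is `< 2` for some `G`. Each weight occurs there twice, for `(x, y)` and `(y, x)`, so all weights are
`< 1` for this `G`, which says precisely that no pair of points is distorted too much.
-/

open BigOperators
open MeasureTheory ProbabilityTheory Real
open scoped RealInnerProductSpace

/-- The parameter minimising `t ↦ log E[exp (t * (g ^ 2 - a))]` for a standard Gaussian `g`. It is
positive for `a > 1` (upper tail) and negative for `a < 1` (lower tail). -/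
noncomputable def chernoff (a : ℝ) : ℝ := (1 - 1 / a) / 2

lemma integral_exp_sq_gaussianReal {a : ℝ} (ha : 0 < a) :
    ∫ x, exp (chernoff a * x ^ 2) ∂(gaussianReal 0 1) = √a := by
  rw [integral_gaussianReal_eq_integral_smul one_ne_zero]
  have h : ∀ x : ℝ, gaussianPDFReal 0 1 x • exp (chernoff a * x ^ 2)
      = (√(2 * π))⁻¹ * exp (-(1 / (2 * a)) * x ^ 2) := by
    intro x
    simp only [gaussianPDFReal, smul_eq_mul, NNReal.coe_one, mul_one, sub_zero]
    rw [mul_assoc, ← exp_add]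
    congr 2
    unfold chernoff
    field_simp
    ring
  simp_rw [h]
  rw [integral_const_mul, integral_gaussian]
  have : π / (1 / (2 * a)) = (2 * π) * a := by field_simp
  rw [this, sqrt_mul (x := 2 * π) (by positivity) a, inv_mul_cancel_left₀ (by positivity)]

section

variable {E : Type*} [NormedAddCommGroup E] [InnerProductSpace ℝ E] [FiniteDimensional ℝ E]
  [MeasurableSpace E] [BorelSpace E]

lemma map_inner_stdGaussian {u : E} (hu : ‖u‖ = 1) :
    (stdGaussian E).map (fun g => ⟪u, g⟫) = gaussianReal 0 1 := by
  have h := IsGaussian.map_eq_gaussianReal (μ := stdGaussian E) (innerSL ℝ u)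
  rw [integral_strongDual_stdGaussian, variance_dual_stdGaussian, innerSL_apply_norm, hu] at h
  simpa using h

lemma integral_chernoff_weight {k : ℕ} {a : ℝ} (ha : 0 < a) {u : E} (hu : ‖u‖ = 1) :
    ∫ G : Fin k → E, exp (chernoff a * (∑ i, ⟪u, G i⟫ ^ 2 - k * a))
        ∂(Measure.pi fun _ => stdGaussian E)
      = exp (-(k * (a - 1 - log a) / 2)) := by
  have h1 : ∫ g, exp (chernoff a * ⟪u, g⟫ ^ 2) ∂(stdGaussian E) = √a := by
    rw [← integral_exp_sq_gaussianReal ha, ← map_inner_stdGaussian hu,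
      integral_map (by fun_prop) (by fun_prop)]
  have h : ∀ G : Fin k → E, exp (chernoff a * (∑ i, ⟪u, G i⟫ ^ 2 - k * a))
      = (∏ i, exp (chernoff a * ⟪u, G i⟫ ^ 2)) * exp (-(chernoff a * (k * a))) := by
    intro G
    rw [← exp_sum, ← exp_add, ← Finset.mul_sum]
    congr 1
    ring
  simp_rw [h]
  rw [integral_mul_const,
    integral_fintype_prod_eq_prod (f := fun _ g => exp (chernoff a * ⟪u, g⟫ ^ 2))]
  simp_rw [h1]
  have h2 : √a = exp (log a / 2) := by
    rw [← log_sqrt ha.le, exp_log (sqrt_pos.2 ha)]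
  rw [h2, Finset.prod_const, Finset.card_univ, Fintype.card_fin, ← exp_nat_mul, ← exp_add]
  congr 1
  unfold chernoff
  field_simp
  ring

lemma integrable_chernoff_weight {k : ℕ} {a : ℝ} (ha : 0 < a) {u : E} (hu : ‖u‖ = 1) :
    Integrable (fun G : Fin k → E => exp (chernoff a * (∑ i, ⟪u, G i⟫ ^ 2 - k * a)))
      (Measure.pi fun _ => stdGaussian E) := by
  -- a nonzero Bochner integral certifies integrability
  by_contra h
  have := integral_undef h
  rw [integral_chernoff_weight ha hu] at this
  exact (exp_pos _).ne' this

/-- The scale `c = artanh ε / ε` satisfies `c * (1 - ε) < 1 < c * (1 + ε)` and gives the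
chi-square rate function `a - 1 - log a` the same value, at least `ε ^ 2 / 2`, at both points. -/
lemma exists_scale {ε : ℝ} (hε0 : 0 < ε) (hε1 : ε < 1) :
    ∃ c : ℝ, 0 < c ∧ 1 < c * (1 + ε) ∧ c * (1 - ε) < 1 ∧
      ε ^ 2 / 2 ≤ c * (1 + ε) - 1 - log (c * (1 + ε)) ∧
      ε ^ 2 / 2 ≤ c * (1 - ε) - 1 - log (c * (1 - ε)) := by
  have hp : 0 < 1 + ε := by linarith
  have hm : 0 < 1 - ε := by linarith
  have hdiv : log ((1 + ε) / (1 - ε)) = log (1 + ε) - log (1 - ε) := log_div hp.ne' hm.ne'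
  have hdiv' : log ((1 - ε) / (1 + ε)) = log (1 - ε) - log (1 + ε) := log_div hm.ne' hp.ne'
  obtain ⟨c, hc⟩ : ∃ c : ℝ, c * (2 * ε) = log (1 + ε) - log (1 - ε) :=
    ⟨_, div_mul_cancel₀ _ (by positivity)⟩
  have hup : c * (2 * ε) < (1 + ε) / (1 - ε) - 1 := by
    rw [hc, ← hdiv]
    exact log_lt_sub_one_of_pos (by positivity) (by rw [Ne, div_eq_one_iff_eq hm.ne']; linarith)
  have hlo : -(c * (2 * ε)) < (1 - ε) / (1 + ε) - 1 := by
    rw [hc, neg_sub, ← hdiv']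
    exact log_lt_sub_one_of_pos (by positivity) (by rw [Ne, div_eq_one_iff_eq hp.ne']; linarith)
  have hup' : c * (1 - ε) < 1 := by
    have : (1 + ε) / (1 - ε) - 1 = 2 * ε / (1 - ε) := by field_simp; ring
    rw [this, lt_div_iff₀ hm] at hup
    nlinarith
  have hlo' : 1 < c * (1 + ε) := by
    have : (1 - ε) / (1 + ε) - 1 = -(2 * ε) / (1 + ε) := by field_simp; ring
    rw [this, lt_div_iff₀ hp] at hlo
    nlinarith
  have hc0 : 0 < c := by
    by_contra h
    nlinarith
  have hsq : log (1 + ε) + log (1 - ε) ≤ -ε ^ 2 := by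
    rw [← log_mul hp.ne' hm.ne']
    have := log_le_sub_one_of_pos (mul_pos hp hm)
    linarith
  have hlc := log_le_sub_one_of_pos hc0
  refine ⟨c, hc0, hlo', hup', ?_, ?_⟩
  · rw [log_mul hc0.ne' hp.ne']
    linarith
  · rw [log_mul hc0.ne' hm.ne']
    linarith

/-- For some choice of `k` vectors, every difference of distinct points of `X`, once normalised,
has `∑ i, ⟪u, G i⟫ ^ 2` strictly between `k * (c * (1 - ε))` and `k * (c * (1 + ε))`. -/
lemma exists_good_vectors {k : ℕ} {ε c : ℝ} (hε1 : ε < 1) (hc0 : 0 < c)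
    (hcp : 1 < c * (1 + ε)) (hcm : c * (1 - ε) < 1)
    (hIp : ε ^ 2 / 2 ≤ c * (1 + ε) - 1 - log (c * (1 + ε)))
    (hIm : ε ^ 2 / 2 ≤ c * (1 - ε) - 1 - log (c * (1 - ε)))
    (X : Finset E) (hX : 0 < X.card) (hk : 8 * log X.card ≤ k * ε ^ 2) :
    ∃ G : Fin k → E, ∀ x ∈ X, ∀ y ∈ X, x ≠ y →
      k * (c * (1 - ε)) < ∑ i, ⟪‖x - y‖⁻¹ • (x - y), G i⟫ ^ 2 ∧
      ∑ i, ⟪‖x - y‖⁻¹ • (x - y), G i⟫ ^ 2 < k * (c * (1 + ε)) := by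
  classical
  set a := c * (1 + ε) with ha
  set b := c * (1 - ε) with hb
  have ha0 : 0 < a := by linarith
  have hb0 : 0 < b := mul_pos hc0 (by linarith)
  have hta : 0 < chernoff a := by
    have : 1 / a < 1 := by rwa [div_lt_one ha0]
    unfold chernoff; linarith
  have htb : chernoff b < 0 := by
    have : 1 < 1 / b := by rwa [one_lt_div hb0]
    unfold chernoff; linarith
  have hn : (0 : ℝ) < X.card := by exact_mod_cast hX
  -- either tail costs at most `n⁻²`
  have hrate : ∀ r : ℝ, ε ^ 2 / 2 ≤ r → exp (-(k * r / 2)) ≤ ((X.card : ℝ) ^ 2)⁻¹ := by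
    intro r hr
    have : exp (-(2 * log X.card)) = ((X.card : ℝ) ^ 2)⁻¹ := by
      rw [exp_neg, mul_comm, exp_mul, exp_log hn]
      norm_num
    rw [← this, exp_le_exp]
    have := mul_le_mul_of_nonneg_left hr (Nat.cast_nonneg (α := ℝ) k)
    linarith
  let u : E × E → E := fun p => ‖p.1 - p.2‖⁻¹ • (p.1 - p.2)
  have hu : ∀ p ∈ X.offDiag, ‖u p‖ = 1 := by
    intro p hp
    have hne := (Finset.mem_offDiag.1 hp).2.2
    have : ‖p.1 - p.2‖ ≠ 0 := norm_ne_zero_iff.2 (sub_ne_zero.2 hne)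
    simp only [u, norm_smul, norm_inv, norm_norm]
    exact inv_mul_cancel₀ this
  let w : ℝ → E × E → (Fin k → E) → ℝ :=
    fun a p G => exp (chernoff a * (∑ i, ⟪u p, G i⟫ ^ 2 - k * a))
  let μ : Measure (Fin k → E) := Measure.pi fun _ => stdGaussian E
  have hint : ∀ p ∈ X.offDiag, Integrable (fun G => w a p G + w b p G) μ := fun p hp =>
    (integrable_chernoff_weight ha0 (hu p hp)).add (integrable_chernoff_weight hb0 (hu p hp))
  have hle : ∫ G, ∑ p ∈ X.offDiag, (w a p G + w b p G) ∂μ < 2 := by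
    rw [integral_finsetSum _ hint]
    have hterm : ∀ p ∈ X.offDiag,
        ∫ G, (w a p G + w b p G) ∂μ ≤ 2 * ((X.card : ℝ) ^ 2)⁻¹ := by
      intro p hp
      rw [integral_add (integrable_chernoff_weight ha0 (hu p hp))
        (integrable_chernoff_weight hb0 (hu p hp)), integral_chernoff_weight ha0 (hu p hp),
        integral_chernoff_weight hb0 (hu p hp)]
      linarith [hrate _ hIp, hrate _ hIm]
    refine (Finset.sum_le_card_nsmul _ _ _ hterm).trans_lt ?_
    rw [nsmul_eq_mul, Finset.offDiag_card, Nat.cast_sub (Nat.le_mul_self _), Nat.cast_mul,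
      ← div_eq_mul_inv, ← mul_div_assoc, div_lt_iff₀ (by positivity)]
    nlinarith
  obtain ⟨G, hG⟩ := exists_le_integral (integrable_finsetSum _ hint)
  replace hG := hG.trans_lt hle
  refine ⟨G, fun x hx y hy hxy => ?_⟩
  have hw0 : ∀ a p, 0 < w a p G := fun _ _ => exp_pos _
  -- the weights do not see the orientation of a pair
  have hswap : ∀ a, w a (y, x) G = w a (x, y) G := by
    intro a
    have : u (y, x) = -u (x, y) := by
      simp only [u]
      rw [norm_sub_rev, ← smul_neg, neg_sub]
    simp only [w, this, inner_neg_left, neg_sq]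
  have hpair : (w a (x, y) G + w b (x, y) G) + (w a (y, x) G + w b (y, x) G) < 2 := by
    refine lt_of_le_of_lt ?_ hG
    rw [← Finset.sum_pair (f := fun p => w a p G + w b p G) (a := (x, y)) (b := (y, x))
      (by simpa using fun h _ => hxy h)]
    refine Finset.sum_le_sum_of_subset_of_nonneg ?_
      fun p _ _ => (add_pos (hw0 a p) (hw0 b p)).le
    intro p hp
    rcases Finset.mem_insert.1 hp with rfl | hp
    · exact Finset.mem_offDiag.2 ⟨hx, hy, hxy⟩
    · rw [Finset.mem_singleton.1 hp]
      exact Finset.mem_offDiag.2 ⟨hy, hx, hxy.symm⟩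
  rw [hswap, hswap] at hpair
  have hA : w a (x, y) G < 1 := by linarith [hw0 b (x, y)]
  have hB : w b (x, y) G < 1 := by linarith [hw0 a (x, y)]
  have hA' := exp_lt_one_iff.1 hA
  have hB' := exp_lt_one_iff.1 hB
  constructor
  · have := pos_of_mul_neg_right hB' htb.le
    exact sub_pos.1 this
  · have := neg_of_mul_neg_right hA' hta.le
    exact sub_neg.1 this

end

/-- Johnson–Lindenstrauss lemma: for `0 < ε < 1` and a set `X` of `n` points in `ℝ^d`,
if `k ≥ 8 (log n)/ε²` then there is a map `f : ℝ^d → ℝ^k` preserving all pairwise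
squared distances within a factor `1 ± ε`. -/
theorem stmt5 (d n k : ℕ) (ε : ℝ) (hε0 : 0 < ε) (hε1 : ε < 1)
    (X : Finset (EuclideanSpace ℝ (Fin d))) (hX : X.card = n)
    (hk : 8 * Real.log n / ε ^ 2 ≤ (k : ℝ)) :
    ∃ f : EuclideanSpace ℝ (Fin d) → EuclideanSpace ℝ (Fin k),
      ∀ x ∈ X, ∀ y ∈ X,
        (1 - ε) * ‖x - y‖ ^ 2 ≤ ‖f x - f y‖ ^ 2 ∧
        ‖f x - f y‖ ^ 2 ≤ (1 + ε) * ‖x - y‖ ^ 2 := by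
  subst hX
  rw [div_le_iff₀ (by positivity)] at hk
  rcases le_or_gt X.card 1 with hn | hn
  · refine ⟨fun _ => 0, fun x hx y hy => ?_⟩
    obtain rfl := Finset.card_le_one.1 hn x hx y hy
    simp
  have hlog : 0 < log X.card := log_pos (by exact_mod_cast hn)
  have hk0 : (0 : ℝ) < k := by
    by_contra h
    nlinarith [sq_nonneg ε]
  obtain ⟨c, hc0, hcp, hcm, hIp, hIm⟩ := exists_scale hε0 hε1
  obtain ⟨G, hG⟩ := exists_good_vectors hε1 hc0 hcp hcm hIp hIm X (by omega) hk
  refine ⟨fun x => WithLp.toLp 2 fun i => (√(k * c))⁻¹ * ⟪x, G i⟫, fun x hx y hy => ?_⟩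
  by_cases hxy : x = y
  · subst hxy
    simp
  obtain ⟨h1, h2⟩ := hG x hx y hy hxy
  have hr : 0 < ‖x - y‖ := norm_pos_iff.2 (sub_ne_zero.2 hxy)
  have hf : ‖(WithLp.toLp 2 fun i => (√(k * c))⁻¹ * ⟪x, G i⟫ : EuclideanSpace ℝ (Fin k))
        - WithLp.toLp 2 fun i => (√(k * c))⁻¹ * ⟪y, G i⟫‖ ^ 2
      = (∑ i, ⟪‖x - y‖⁻¹ • (x - y), G i⟫ ^ 2) / (k * c) * ‖x - y‖ ^ 2 := by
    rw [EuclideanSpace.norm_sq_eq, Finset.sum_div, Finset.sum_mul]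
    refine Finset.sum_congr rfl fun i _ => ?_
    have hs : √(k * c) ^ 2 = k * c := sq_sqrt (by positivity)
    rw [PiLp.sub_apply, ← mul_sub, ← inner_sub_left, norm_eq_abs, sq_abs, real_inner_smul_left,
      mul_pow, mul_pow, inv_pow, inv_pow, hs]
    field_simp
  rw [hf]
  constructor
  · gcongr
    rw [le_div_iff₀ (by positivity)]
    linarith
  · gcongr
    rw [div_le_iff₀ (by positivity)]
    linarith
end

section
/- (Mirsky's theorem) Let N be a unitarily invariant norm on ℂ^{n×p}, i.e. a norm satisfying N(UAV*) = N(A) for all unitary U ∈ ℂ^{n×n}, unitary V ∈ ℂ^{p×p} and all A ∈ ℂ^{n×p}. Let A, B ∈ ℂ^{n×p} (n ≥ p) have singular values α_1 ≥ … ≥ α_p and β_1 ≥ … ≥ β_p respectively. Then N(D) ≤ N(A − B), where D ∈ ℂ^{n×p} is the matrix with entries α_j − β_j on the diagonal positions (j, j) for 1 ≤ j ≤ p and zeros elsewhere. -/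
open Matrix BigOperators

/-!
The proof reduces the theorem to a family of scalar inequalities and then transfers these to `N`.
Write `σ` for the singular values of `A - B` and `d = α - β`.

*Weak majorization.* For every `c ≥ 0`, `∑ (|d j| - c)⁺ ≤ ∑ (σ j - c)⁺` (`sum_posPart_sub_le`).
With `H_X = [[0, X], [Xᴴ, 0]]` the Hermitian dilation, let `P` be the positive semidefinite matrix
of trace `∑ (σ j - c)⁺` obtained from the positive part of `H_{A-B} - c`, and put `M = H_B + P`.
Then `H_B ≤ M` and `H_A - c ≤ M`, so the min-max principle (`le_eigenvalue_of_form`) bounds the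
ordered eigenvalues of `M` from below: the `k`-th largest by `β k` and `α k - c`, the `k`-th
smallest by `-β k` and `-α k - c`, and those in between by `0`. Hence the `k`-th largest and
the `k`-th smallest add up to at least `(|d k| - c)⁺`; summing, the trace of `M`, which is that of
`P`, dominates `∑ (|d k| - c)⁺`. This is the Li–Mathias argument for Lidskii's inequality.

*From weak majorization to `N`.* The function `x ↦ N (diag x)` is convex and invariant under
permutations and sign changes. By Hahn–Banach and Abel summation (`exists_perm_pairing`), weak
majorization puts `d` in the convex hull of the signed permutations of `σ`, so
`N (diag d) ≤ N (diag σ)` (`gauge_le`), and `N (diag σ) = N (A - B)` by a singular value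
decomposition of `A - B` (`exists_svd`).
-/

/-! ### Norms and isometries -/

lemma star_dotProduct_self_re {ι : Type*} [Fintype ι] (x : ι → ℂ) :
    (star x ⬝ᵥ x).re = ∑ i, ‖x i‖ ^ 2 := by
  simp only [dotProduct, Complex.re_sum]
  refine Finset.sum_congr rfl fun i _ => ?_
  simp [Complex.sq_norm, Complex.normSq_apply]

lemma star_mulVec_dotProduct {ι κ μ : Type*} [Fintype ι] [Fintype κ] [Fintype μ]
    (P : Matrix ι κ ℂ) (Q : Matrix ι μ ℂ) (x : κ → ℂ) (y : μ → ℂ) :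
    star (P *ᵥ x) ⬝ᵥ (Q *ᵥ y) = star x ⬝ᵥ ((Pᴴ * Q) *ᵥ y) := by
  rw [star_mulVec, ← dotProduct_mulVec, mulVec_mulVec]

lemma sum_norm_sq_isometry {ι κ : Type*} [Fintype ι] [Fintype κ] [DecidableEq κ]
    (P : Matrix ι κ ℂ) (hP : Pᴴ * P = 1) (x : κ → ℂ) :
    ∑ i, ‖(P *ᵥ x) i‖ ^ 2 = ∑ i, ‖x i‖ ^ 2 := by
  rw [← star_dotProduct_self_re, ← star_dotProduct_self_re, star_mulVec_dotProduct, hP, one_mulVec]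

/-- Bessel's inequality for a matrix with orthonormal columns. -/
lemma sum_norm_sq_bessel {ι κ : Type*} [Fintype ι] [Fintype κ] [DecidableEq κ]
    (P : Matrix ι κ ℂ) (hP : Pᴴ * P = 1) (x : ι → ℂ) :
    ∑ i, ‖(Pᴴ *ᵥ x) i‖ ^ 2 ≤ ∑ i, ‖x i‖ ^ 2 := by
  have h0 : 0 ≤ ∑ i, ‖(x - P *ᵥ (Pᴴ *ᵥ x)) i‖ ^ 2 := Finset.sum_nonneg fun i _ => by positivity
  have h1 : star x ⬝ᵥ (P *ᵥ (Pᴴ *ᵥ x)) = star (Pᴴ *ᵥ x) ⬝ᵥ (Pᴴ *ᵥ x) := by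
    rw [star_mulVec_dotProduct, conjTranspose_conjTranspose, mulVec_mulVec]
  have h2 : star (P *ᵥ (Pᴴ *ᵥ x)) ⬝ᵥ x = star (Pᴴ *ᵥ x) ⬝ᵥ (Pᴴ *ᵥ x) := by
    rw [star_mulVec, ← dotProduct_mulVec]
  have h3 : star (P *ᵥ (Pᴴ *ᵥ x)) ⬝ᵥ (P *ᵥ (Pᴴ *ᵥ x)) = star (Pᴴ *ᵥ x) ⬝ᵥ (Pᴴ *ᵥ x) := by
    rw [star_mulVec_dotProduct, hP, one_mulVec]
  rw [← star_dotProduct_self_re, star_sub, sub_dotProduct, dotProduct_sub, dotProduct_sub,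
    h1, h2, h3] at h0
  simp only [Complex.sub_re, star_dotProduct_self_re] at h0
  linarith

/-! ### Ordered eigenvalues -/

/-- Spectral theorem with the eigenvalues in decreasing order. -/
lemma exists_sorted_spectral {ι : Type*} [Fintype ι] [DecidableEq ι] (m : ℕ)
    (hm : Fintype.card ι = m) (M : Matrix ι ι ℂ) (hM : M.IsHermitian) :
    ∃ (y : Fin m → ℝ) (W : Matrix ι (Fin m) ℂ), Antitone y ∧ Wᴴ * W = 1 ∧
      Wᴴ * M * W = diagonal (fun k => (y k : ℂ)) ∧ ∑ k, y k = M.trace.re := by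
  subst hm
  set e : Fin (Fintype.card ι) ≃ ι := Fintype.equivOfCardEq (Fintype.card_fin _) with he
  have hev : ∀ k, hM.eigenvalues (e k) = hM.eigenvalues₀ k := fun k => by
    simp [IsHermitian.eigenvalues, he]
  have hU : (hM.eigenvectorUnitary : Matrix ι ι ℂ)ᴴ * (hM.eigenvectorUnitary : Matrix ι ι ℂ) = 1 :=
    Unitary.coe_star_mul_self hM.eigenvectorUnitary
  have hD : (hM.eigenvectorUnitary : Matrix ι ι ℂ)ᴴ * M * (hM.eigenvectorUnitary : Matrix ι ι ℂ)
      = diagonal (fun i => (hM.eigenvalues i : ℂ)) := by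
    have := hM.conjStarAlgAut_star_eigenvectorUnitary
    simpa [Unitary.conjStarAlgAut_apply, star_eq_conjTranspose, Function.comp_def] using this
  refine ⟨hM.eigenvalues₀, (hM.eigenvectorUnitary : Matrix ι ι ℂ).submatrix id e,
    hM.eigenvalues₀_antitone, ?_, ?_, ?_⟩
  · rw [conjTranspose_submatrix, submatrix_mul _ _ _ id _ Function.bijective_id |>.symm, hU]
    simp
  · have : M = M.submatrix id id := by simp
    rw [conjTranspose_submatrix]
    nth_rewrite 2 [this]
    rw [submatrix_mul _ _ _ id _ Function.bijective_id |>.symm,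
      submatrix_mul _ _ _ id _ Function.bijective_id |>.symm, hD]
    ext i j
    simp [diagonal_apply, hev]
  · rw [hM.trace_eq_sum_eigenvalues, ← e.sum_comp]
    simp [hev]

/-- One half of the Courant–Fischer principle: if the quadratic form of `M` is at least `t ‖z‖²`
on a subspace cut out by at most `m - 1 - k` linear functionals, then the eigenvalue of index `k`
(counting from `0`, in decreasing order) is at least `t`, because that subspace meets the span of
the eigenvectors of index at least `k`. -/
lemma le_eigenvalue_of_form {ι κ : Type*} [Fintype ι] [DecidableEq ι] [Fintype κ] {m : ℕ}
    (M : Matrix ι ι ℂ) (y : Fin m → ℝ) (W : Matrix ι (Fin m) ℂ) (hy : Antitone y)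
    (hW : Wᴴ * W = 1) (hMW : Wᴴ * M * W = diagonal (fun k => (y k : ℂ)))
    (k : Fin m) (t : ℝ) (L : (ι → ℂ) →ₗ[ℂ] (κ → ℂ)) (hκ : Fintype.card κ + k < m)
    (h : ∀ z, L z = 0 → t * ∑ i, ‖z i‖ ^ 2 ≤ (star z ⬝ᵥ (M *ᵥ z)).re) : t ≤ y k := by
  let R : (Fin m → ℂ) →ₗ[ℂ] ({l : Fin m // l < k} → ℂ) := LinearMap.funLeft ℂ ℂ Subtype.val
  let F := (L ∘ₗ W.mulVecLin).prod R
  have hc : Fintype.card {l : Fin m // l < k} = k := by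
    rw [Fintype.card_subtype, Finset.filter_gt_eq_Iio, Fin.card_Iio]
  have hker : LinearMap.ker F ≠ ⊥ := by
    apply LinearMap.ker_ne_bot_of_finrank_lt
    simp [hc]
    exact hκ
  obtain ⟨a, ha, ha0⟩ := Submodule.exists_mem_ne_zero_of_ne_bot hker
  have ha' : L (W *ᵥ a) = 0 ∧ R a = 0 := by simpa [F] using ha
  have hz := h _ ha'.1
  rw [sum_norm_sq_isometry W hW, mulVec_mulVec, star_mulVec_dotProduct, ← Matrix.mul_assoc, hMW] at hz
  have hform : (star a ⬝ᵥ (diagonal (fun k => (y k : ℂ)) *ᵥ a)).re = ∑ l, y l * ‖a l‖ ^ 2 := by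
    simp only [dotProduct, mulVec_diagonal, Complex.re_sum]
    refine Finset.sum_congr rfl fun i _ => ?_
    simp [Complex.sq_norm, Complex.normSq_apply]; ring
  have hle : ∑ l, y l * ‖a l‖ ^ 2 ≤ y k * ∑ l, ‖a l‖ ^ 2 := by
    rw [Finset.mul_sum]
    refine Finset.sum_le_sum fun l _ => ?_
    by_cases hl : l < k
    · have : a l = 0 := congrFun ha'.2 ⟨l, hl⟩
      simp [this]
    · exact mul_le_mul_of_nonneg_right (hy (not_lt.1 hl)) (by positivity)
  have hpos : 0 < ∑ l, ‖a l‖ ^ 2 := by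
    obtain ⟨l, hl⟩ := Function.ne_iff.1 ha0
    exact Finset.sum_pos' (fun _ _ => by positivity) ⟨l, Finset.mem_univ _, by
      have : 0 < ‖a l‖ := norm_pos_iff.2 hl
      positivity⟩
  rw [hform] at hz
  exact le_of_mul_le_mul_right (hz.trans hle) hpos

lemma conj_mul_re (a b : ℂ) : 2 * (star a * b).re = (‖a + b‖ ^ 2 - ‖a‖ ^ 2 - ‖b‖ ^ 2) := by
  simp [Complex.sq_norm, Complex.normSq_apply]; ring

lemma abs_two_conj_mul_re (a b : ℂ) : |2 * (star a * b).re| ≤ ‖a‖ ^ 2 + ‖b‖ ^ 2 := by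
  rw [abs_le]
  simp only [Complex.sq_norm, Complex.normSq_apply, Complex.mul_re, Complex.star_def,
    Complex.conj_re, Complex.conj_im]
  constructor <;>
  nlinarith [sq_nonneg (a.re + b.re), sq_nonneg (a.im + b.im), sq_nonneg (a.re - b.re),
    sq_nonneg (a.im - b.im)]

/-! ### Hermitian dilations and weak majorization -/

section Dilation

variable {n p : ℕ}

lemma form_svd (G : Matrix (Fin n) (Fin p) ℂ) (V : Matrix (Fin p) (Fin p) ℂ) (α : Fin p → ℝ)
    (x : Fin n → ℂ) (y : Fin p → ℂ) :
    2 * (star x ⬝ᵥ ((G * diagonal (fun j => (α j : ℂ)) * Vᴴ) *ᵥ y)).re =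
      ∑ j, α j * (2 * (star ((Gᴴ *ᵥ x) j) * (Vᴴ *ᵥ y) j).re) := by
  have : star x ⬝ᵥ ((G * diagonal (fun j => (α j : ℂ)) * Vᴴ) *ᵥ y) =
      star (Gᴴ *ᵥ x) ⬝ᵥ (diagonal (fun j => (α j : ℂ)) *ᵥ (Vᴴ *ᵥ y)) := by
    rw [star_mulVec, conjTranspose_conjTranspose, ← dotProduct_mulVec, mulVec_mulVec, mulVec_mulVec,
      Matrix.mul_assoc]
  rw [this]
  simp only [dotProduct, mulVec_diagonal, Complex.re_sum, Finset.mul_sum]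
  refine Finset.sum_congr rfl fun i _ => ?_
  simp; ring

/-- The Hermitian dilation `[[0, B], [Bᴴ, 0]]` of `B` plus `½ Q diag(s) Qᴴ`, where `Q` stacks `G`
on top of `V`. When `G` and `V` have orthonormal columns, those of `Q / √2` are orthonormal, so the
second term has the eigenvalues `s`, apart from zeros. -/
noncomputable def dil (B G : Matrix (Fin n) (Fin p) ℂ) (V : Matrix (Fin p) (Fin p) ℂ)
    (s : Fin p → ℝ) : Matrix (Fin n ⊕ Fin p) (Fin n ⊕ Fin p) ℂ :=
  fromBlocks 0 B Bᴴ 0 + fromRows G V * diagonal (fun j => ((s j / 2 : ℝ) : ℂ)) * (fromRows G V)ᴴ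

lemma dil_isHermitian (B G : Matrix (Fin n) (Fin p) ℂ) (V : Matrix (Fin p) (Fin p) ℂ)
    (s : Fin p → ℝ) : (dil B G V s).IsHermitian := by
  apply IsHermitian.add
  · exact IsHermitian.fromBlocks isHermitian_zero rfl isHermitian_zero
  · apply isHermitian_mul_mul_conjTranspose
    rw [IsHermitian, diagonal_conjTranspose]
    congr 1
    ext j
    simp

lemma dil_trace (B G : Matrix (Fin n) (Fin p) ℂ) (V : Matrix (Fin p) (Fin p) ℂ)
    (s : Fin p → ℝ) (hG : Gᴴ * G = 1) (hV : Vᴴ * V = 1) :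
    (dil B G V s).trace.re = ∑ j, s j := by
  have hQ : (fromRows G V)ᴴ * fromRows G V = (2 : ℂ) • (1 : Matrix (Fin p) (Fin p) ℂ) := by
    rw [conjTranspose_fromRows_eq_fromCols_conjTranspose, fromCols_mul_fromRows, hG, hV, two_smul]
  rw [dil, trace_add, Matrix.mul_assoc, trace_mul_comm, Matrix.mul_assoc, hQ]
  have h0 : (fromBlocks 0 B Bᴴ 0).trace = 0 := by simp [trace]
  rw [h0, zero_add, Matrix.mul_smul, Matrix.mul_one, trace_smul, trace_diagonal, smul_eq_mul,
    Finset.mul_sum, Complex.re_sum]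
  refine Finset.sum_congr rfl fun j _ => ?_
  simp
  ring

lemma dil_form (B G : Matrix (Fin n) (Fin p) ℂ) (V : Matrix (Fin p) (Fin p) ℂ)
    (s : Fin p → ℝ) (z : Fin n ⊕ Fin p → ℂ) :
    (star z ⬝ᵥ (dil B G V s *ᵥ z)).re =
      2 * (star (z ∘ Sum.inl) ⬝ᵥ (B *ᵥ (z ∘ Sum.inr))).re +
      ∑ j, s j / 2 * ‖(Gᴴ *ᵥ (z ∘ Sum.inl)) j + (Vᴴ *ᵥ (z ∘ Sum.inr)) j‖ ^ 2 := by
  have h1 : star z ⬝ᵥ (fromBlocks 0 B Bᴴ 0 *ᵥ z) =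
      star (z ∘ Sum.inl) ⬝ᵥ (B *ᵥ (z ∘ Sum.inr)) +
        star (star (z ∘ Sum.inl) ⬝ᵥ (B *ᵥ (z ∘ Sum.inr))) := by
    rw [fromBlocks_mulVec]
    have : star z = Sum.elim (star (z ∘ Sum.inl)) (star (z ∘ Sum.inr)) := by
      ext i; cases i <;> rfl
    rw [this, sumElim_dotProduct_sumElim]
    rw [← star_dotProduct (B *ᵥ _), star_mulVec, ← dotProduct_mulVec]
    simp
  have h2 : star z ⬝ᵥ ((fromRows G V * diagonal (fun j => ((s j / 2 : ℝ) : ℂ)) *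
      (fromRows G V)ᴴ) *ᵥ z) = ∑ j, ((s j / 2 : ℝ) : ℂ) *
      (star ((Gᴴ *ᵥ (z ∘ Sum.inl)) j + (Vᴴ *ᵥ (z ∘ Sum.inr)) j) *
        ((Gᴴ *ᵥ (z ∘ Sum.inl)) j + (Vᴴ *ᵥ (z ∘ Sum.inr)) j)) := by
    have hz : (fromRows G V)ᴴ *ᵥ z = Gᴴ *ᵥ (z ∘ Sum.inl) + Vᴴ *ᵥ (z ∘ Sum.inr) := by
      rw [conjTranspose_fromRows_eq_fromCols_conjTranspose, fromCols_mulVec]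
    have : star z ⬝ᵥ ((fromRows G V * diagonal (fun j => ((s j / 2 : ℝ) : ℂ)) *
      (fromRows G V)ᴴ) *ᵥ z) = star ((fromRows G V)ᴴ *ᵥ z) ⬝ᵥ
        (diagonal (fun j => ((s j / 2 : ℝ) : ℂ)) *ᵥ ((fromRows G V)ᴴ *ᵥ z)) := by
      rw [star_mulVec, conjTranspose_conjTranspose, ← dotProduct_mulVec, mulVec_mulVec,
        mulVec_mulVec, Matrix.mul_assoc]
    rw [this, hz]
    simp only [dotProduct, mulVec_diagonal, Pi.star_apply, Pi.add_apply]
    refine Finset.sum_congr rfl fun i _ => ?_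
    ring
  rw [dil, add_mulVec, dotProduct_add, h1, h2, Complex.add_re, Complex.add_re, Complex.re_sum]
  congr 1
  · simp; ring
  · refine Finset.sum_congr rfl fun i _ => ?_
    rw [Complex.re_ofReal_mul]
    congr 1
    simp [Complex.sq_norm, Complex.normSq_apply]
    ring

lemma sum_norm_sq_split (z : Fin n ⊕ Fin p → ℂ) :
    ∑ i, ‖z i‖ ^ 2 = ∑ i, ‖(z ∘ Sum.inl) i‖ ^ 2 + ∑ i, ‖(z ∘ Sum.inr) i‖ ^ 2 :=
  Fintype.sum_sum_type _

/-- The dilation of `A` minus `c` lies below that of `B` plus the positive part of the dilation of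
`A - B` minus `c`. -/
lemma dil_form_ge (A B G : Matrix (Fin n) (Fin p) ℂ) (V : Matrix (Fin p) (Fin p) ℂ)
    (σ : Fin p → ℝ) (hσ : ∀ j, 0 ≤ σ j) (hG : Gᴴ * G = 1) (hV : Vᴴ * V = 1)
    (hC : A - B = G * diagonal (fun j => (σ j : ℂ)) * Vᴴ) (c : ℝ) (hc : 0 ≤ c)
    (z : Fin n ⊕ Fin p → ℂ) :
    2 * (star (z ∘ Sum.inl) ⬝ᵥ (A *ᵥ (z ∘ Sum.inr))).re - c * ∑ i, ‖z i‖ ^ 2 ≤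
      (star z ⬝ᵥ (dil B G V (fun j => max (σ j - c) 0) *ᵥ z)).re := by
  have hA : A = B + G * diagonal (fun j => (σ j : ℂ)) * Vᴴ := by rw [← hC]; abel
  rw [dil_form, hA, add_mulVec, dotProduct_add, Complex.add_re, mul_add, form_svd,
    sum_norm_sq_split]
  set g := Gᴴ *ᵥ (z ∘ Sum.inl)
  set h := Vᴴ *ᵥ (z ∘ Sum.inr)
  have hg : ∑ j, ‖g j‖ ^ 2 ≤ ∑ i, ‖(z ∘ Sum.inl) i‖ ^ 2 := sum_norm_sq_bessel G hG _
  have hh : ∑ j, ‖h j‖ ^ 2 ≤ ∑ i, ‖(z ∘ Sum.inr) i‖ ^ 2 := sum_norm_sq_bessel V hV _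
  have hs : ∑ j, σ j * (2 * (star (g j) * h j).re) ≤
      c * (∑ j, ‖g j‖ ^ 2 + ∑ j, ‖h j‖ ^ 2) + ∑ j, max (σ j - c) 0 / 2 * ‖g j + h j‖ ^ 2 := by
    rw [← Finset.sum_add_distrib, Finset.mul_sum, ← Finset.sum_add_distrib]
    refine Finset.sum_le_sum fun j _ => ?_
    have h1 := (abs_le.1 (abs_two_conj_mul_re (g j) (h j))).2
    have h2 := conj_mul_re (g j) (h j)
    rcases le_total (σ j) c with hjc | hjc
    · rw [max_eq_right (by linarith)]
      have : 0 ≤ ‖g j‖ ^ 2 + ‖h j‖ ^ 2 := by positivity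
      nlinarith [mul_le_mul_of_nonneg_left h1 (hσ j), mul_le_mul_of_nonneg_right hjc this]
    · rw [max_eq_left (by linarith)]
      have h3 : 2 * (star (g j) * h j).re ≤ ‖g j + h j‖ ^ 2 / 2 := by linarith
      nlinarith [mul_le_mul_of_nonneg_left h1 hc, mul_le_mul_of_nonneg_left h3 (sub_nonneg.2 hjc)]
  nlinarith [mul_le_mul_of_nonneg_left hg hc, mul_le_mul_of_nonneg_left hh hc]

/-- On the span of the vectors `(G e_j, V e_j)` with `j ≤ k`, the dilation of `G diag(α) Vᴴ` is at
least `α k`. -/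
lemma form_top (G : Matrix (Fin n) (Fin p) ℂ) (V : Matrix (Fin p) (Fin p) ℂ) (α : Fin p → ℝ)
    (hα : Antitone α) (hG : Gᴴ * G = 1) (hV' : V * Vᴴ = 1) (k : Fin p)
    (x : Fin n → ℂ) (y : Fin p → ℂ) (hx : x = G *ᵥ (Vᴴ *ᵥ y)) (hy : ∀ j, k < j → (Vᴴ *ᵥ y) j = 0) :
    α k * (∑ i, ‖x i‖ ^ 2 + ∑ i, ‖y i‖ ^ 2) ≤
      2 * (star x ⬝ᵥ ((G * diagonal (fun j => (α j : ℂ)) * Vᴴ) *ᵥ y)).re := by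
  have h1 : ∑ i, ‖y i‖ ^ 2 = ∑ i, ‖(Vᴴ *ᵥ y) i‖ ^ 2 :=
    (sum_norm_sq_isometry Vᴴ (by simpa using hV') y).symm
  have h2 : Gᴴ *ᵥ x = Vᴴ *ᵥ y := by rw [hx, mulVec_mulVec, hG, one_mulVec]
  rw [form_svd, h2, h1]
  nth_rewrite 1 [hx]
  rw [sum_norm_sq_isometry G hG, ← two_mul, ← mul_assoc, Finset.mul_sum]
  refine Finset.sum_le_sum fun j _ => ?_
  have h3 : (star ((Vᴴ *ᵥ y) j) * (Vᴴ *ᵥ y) j).re = ‖(Vᴴ *ᵥ y) j‖ ^ 2 := by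
    simp [Complex.sq_norm, Complex.normSq_apply]
  rw [h3]
  by_cases hj : k < j
  · simp [hy j hj]
  · nlinarith [mul_le_mul_of_nonneg_right (hα (not_lt.1 hj)) (sq_nonneg ‖(Vᴴ *ᵥ y) j‖)]

/-- On the orthogonal complement of the vectors `(G e_j, -V e_j)` with `j < k`, the dilation of
`G diag(α) Vᴴ` is at least `-α k`. -/
lemma form_bot (G : Matrix (Fin n) (Fin p) ℂ) (V : Matrix (Fin p) (Fin p) ℂ) (α : Fin p → ℝ)
    (hα : Antitone α) (hα0 : ∀ j, 0 ≤ α j) (hG : Gᴴ * G = 1) (hV : Vᴴ * V = 1) (k : Fin p)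
    (x : Fin n → ℂ) (y : Fin p → ℂ) (hy : ∀ j, j < k → (Gᴴ *ᵥ x) j = (Vᴴ *ᵥ y) j) :
    -α k * (∑ i, ‖x i‖ ^ 2 + ∑ i, ‖y i‖ ^ 2) ≤
      2 * (star x ⬝ᵥ ((G * diagonal (fun j => (α j : ℂ)) * Vᴴ) *ᵥ y)).re := by
  rw [form_svd]
  have hg := sum_norm_sq_bessel G hG x
  have hh := sum_norm_sq_bessel V hV y
  have hs : -α k * (∑ i, ‖(Gᴴ *ᵥ x) i‖ ^ 2 + ∑ i, ‖(Vᴴ *ᵥ y) i‖ ^ 2) ≤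
      ∑ j, α j * (2 * (star ((Gᴴ *ᵥ x) j) * (Vᴴ *ᵥ y) j).re) := by
    rw [← Finset.sum_add_distrib, Finset.mul_sum]
    refine Finset.sum_le_sum fun j _ => ?_
    have h0 : 0 ≤ ‖(Gᴴ *ᵥ x) j‖ ^ 2 + ‖(Vᴴ *ᵥ y) j‖ ^ 2 := by positivity
    by_cases hj : j < k
    · rw [hy j hj]
      have h3 : (star ((Vᴴ *ᵥ y) j) * (Vᴴ *ᵥ y) j).re = ‖(Vᴴ *ᵥ y) j‖ ^ 2 := by
        simp [Complex.sq_norm, Complex.normSq_apply]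
      rw [h3]
      have := hα0 j
      have h4 : 0 ≤ α k * ‖(Vᴴ *ᵥ y) j‖ ^ 2 := mul_nonneg (hα0 k) (by positivity)
      have h5 : 0 ≤ α j * ‖(Vᴴ *ᵥ y) j‖ ^ 2 := mul_nonneg (hα0 j) (by positivity)
      linarith
    · have h1 := (abs_le.1 (abs_two_conj_mul_re ((Gᴴ *ᵥ x) j) ((Vᴴ *ᵥ y) j))).1
      nlinarith [mul_le_mul_of_nonneg_left h1 (hα0 j),
        mul_le_mul_of_nonneg_right (hα (not_lt.1 hj)) h0]
  nlinarith [mul_le_mul_of_nonneg_left hg (hα0 k), mul_le_mul_of_nonneg_left hh (hα0 k)]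

/-- If the dilation of `G diag(α) Vᴴ` is bounded above by `M + c`, then the `k`-th largest
eigenvalue of `M` is at least `α k - c` and the `k`-th smallest at least `-α k - c`, both counted
from `0`. -/
lemma eig_ge (M : Matrix (Fin n ⊕ Fin p) (Fin n ⊕ Fin p) ℂ) (y : Fin (n + p) → ℝ)
    (W : Matrix (Fin n ⊕ Fin p) (Fin (n + p)) ℂ) (hy : Antitone y)
    (hW : Wᴴ * W = 1) (hMW : Wᴴ * M * W = diagonal (fun k => (y k : ℂ)))
    (G : Matrix (Fin n) (Fin p) ℂ) (V : Matrix (Fin p) (Fin p) ℂ) (α : Fin p → ℝ)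
    (hα : Antitone α) (hα0 : ∀ j, 0 ≤ α j) (hG : Gᴴ * G = 1) (hV : Vᴴ * V = 1) (hV' : V * Vᴴ = 1)
    (c : ℝ)
    (hM : ∀ z : Fin n ⊕ Fin p → ℂ, 2 * (star (z ∘ Sum.inl) ⬝ᵥ
      ((G * diagonal (fun j => (α j : ℂ)) * Vᴴ) *ᵥ (z ∘ Sum.inr))).re - c * ∑ i, ‖z i‖ ^ 2 ≤
      (star z ⬝ᵥ (M *ᵥ z)).re) (k : Fin p) :
    (∀ i : Fin (n + p), (i : ℕ) = k → α k - c ≤ y i) ∧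
    (∀ i : Fin (n + p), (i : ℕ) + 1 + k = n + p → -α k - c ≤ y i) := by
  let X : (Fin n ⊕ Fin p → ℂ) →ₗ[ℂ] (Fin n → ℂ) := LinearMap.funLeft ℂ ℂ Sum.inl
  let Y : (Fin n ⊕ Fin p → ℂ) →ₗ[ℂ] (Fin p → ℂ) := LinearMap.funLeft ℂ ℂ Sum.inr
  constructor
  · intro i hi
    let L1 := X - G.mulVecLin ∘ₗ Vᴴ.mulVecLin ∘ₗ Y
    let L2 : (Fin n ⊕ Fin p → ℂ) →ₗ[ℂ] ({j : Fin p // k < j} → ℂ) :=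
      LinearMap.funLeft ℂ ℂ Subtype.val ∘ₗ Vᴴ.mulVecLin ∘ₗ Y
    let L := (LinearEquiv.sumArrowLequivProdArrow (Fin n) {j : Fin p // k < j} ℂ ℂ).symm.toLinearMap
      ∘ₗ L1.prod L2
    refine le_eigenvalue_of_form M y W hy hW hMW i _ L ?_ fun z hz => ?_
    · have hc : Fintype.card {j : Fin p // k < j} = p - 1 - k := by
        rw [Fintype.card_subtype, Finset.filter_lt_eq_Ioi, Fin.card_Ioi]
      have := k.isLt
      rw [Fintype.card_sum, hc, Fintype.card_fin]
      omega
    · have hz' : L1 z = 0 ∧ L2 z = 0 := by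
        have : L1.prod L2 z = 0 := (LinearEquiv.map_eq_zero_iff
          (LinearEquiv.sumArrowLequivProdArrow (Fin n) {j : Fin p // k < j} ℂ ℂ).symm).1 hz
        simpa using this
      have h1 : z ∘ Sum.inl = G *ᵥ (Vᴴ *ᵥ (z ∘ Sum.inr)) := sub_eq_zero.1 hz'.1
      have h2 : ∀ j, k < j → (Vᴴ *ᵥ (z ∘ Sum.inr)) j = 0 := fun j hj => congrFun hz'.2 ⟨j, hj⟩
      have h3 := form_top G V α hα hG hV' k _ _ h1 h2
      rw [← sum_norm_sq_split] at h3
      have := hM z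
      linarith
  · intro i hi
    let L : (Fin n ⊕ Fin p → ℂ) →ₗ[ℂ] ({j : Fin p // j < k} → ℂ) :=
      LinearMap.funLeft ℂ ℂ Subtype.val ∘ₗ (Gᴴ.mulVecLin ∘ₗ X - Vᴴ.mulVecLin ∘ₗ Y)
    refine le_eigenvalue_of_form M y W hy hW hMW i _ L ?_ fun z hz => ?_
    · have hc : Fintype.card {j : Fin p // j < k} = k := by
        rw [Fintype.card_subtype, Finset.filter_gt_eq_Iio, Fin.card_Iio]
      rw [hc]
      omega
    · have h2 : ∀ j, j < k → (Gᴴ *ᵥ (z ∘ Sum.inl)) j = (Vᴴ *ᵥ (z ∘ Sum.inr)) j := fun j hj =>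
        sub_eq_zero.1 (congrFun hz ⟨j, hj⟩)
      have h3 := form_bot G V α hα hα0 hG hV k _ _ h2
      rw [← sum_norm_sq_split] at h3
      have := hM z
      linarith

/-- Pairs the `k`-th largest with the `k`-th smallest entry of `y` for `k < p`; the `n - p` entries
in between are nonnegative and are discarded. -/
lemma sum_pairs (hnp : p ≤ n) (y : Fin (n + p) → ℝ) (f : Fin p → ℝ)
    (hmid : ∀ i : Fin (n + p), (i : ℕ) < n → 0 ≤ y i)
    (hf : ∀ (k : Fin p) (i j : Fin (n + p)), (i : ℕ) = k → (j : ℕ) + 1 + k = n + p →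
      f k ≤ y i + y j) : ∑ k, f k ≤ ∑ i, y i := by
  obtain ⟨q, rfl⟩ := Nat.exists_eq_add_of_le hnp
  rw [Fin.sum_univ_add, Fin.sum_univ_add, ← Equiv.sum_comp Fin.revPerm (fun i => y (Fin.natAdd _ i))]
  have h1 : 0 ≤ ∑ i : Fin q, y (Fin.castAdd p (Fin.natAdd p i)) :=
    Finset.sum_nonneg fun i _ => hmid _ (by simp)
  have h2 : ∑ k, f k ≤ ∑ k, (y (Fin.castAdd p (Fin.castAdd q k)) +
      y (Fin.natAdd (p + q) (Fin.revPerm k))) := by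
    refine Finset.sum_le_sum fun k _ => hf k _ _ (by simp) ?_
    have := k.isLt
    simp [Fin.val_rev]
    omega
  rw [Finset.sum_add_distrib] at h2
  linarith

/-- The singular values of `A` and `B` satisfy `|α - β| ≺_w σ(A - B)`, with weak majorization
expressed by the functions `t ↦ (t - c)⁺`. -/
lemma sum_posPart_sub_le (hnp : p ≤ n) (A B GA GB GC : Matrix (Fin n) (Fin p) ℂ)
    (VA VB VC : Matrix (Fin p) (Fin p) ℂ) (α β σ : Fin p → ℝ)
    (hα : Antitone α) (hα0 : ∀ j, 0 ≤ α j) (hβ : Antitone β) (hβ0 : ∀ j, 0 ≤ β j)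
    (hσ0 : ∀ j, 0 ≤ σ j)
    (hGA : GAᴴ * GA = 1) (hGB : GBᴴ * GB = 1) (hGC : GCᴴ * GC = 1)
    (hVA : VAᴴ * VA = 1) (hVB : VBᴴ * VB = 1) (hVC : VCᴴ * VC = 1)
    (hA : A = GA * diagonal (fun j => (α j : ℂ)) * VAᴴ)
    (hB : B = GB * diagonal (fun j => (β j : ℂ)) * VBᴴ)
    (hC : A - B = GC * diagonal (fun j => (σ j : ℂ)) * VCᴴ) (c : ℝ) (hc : 0 ≤ c) :
    ∑ j, max (|α j - β j| - c) 0 ≤ ∑ j, max (σ j - c) 0 := by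
  set M := dil B GC VC (fun j => max (σ j - c) 0) with hM
  obtain ⟨y, W, hy, hW, hMW, htr⟩ := exists_sorted_spectral (n + p) (by simp) M
    (dil_isHermitian _ _ _ _)
  rw [hM, dil_trace _ _ _ _ hGC hVC] at htr
  rw [← htr]
  have hBle : ∀ z : Fin n ⊕ Fin p → ℂ, 2 * (star (z ∘ Sum.inl) ⬝ᵥ (B *ᵥ (z ∘ Sum.inr))).re ≤
      (star z ⬝ᵥ (M *ᵥ z)).re := by
    intro z
    rw [hM, dil_form]
    have : 0 ≤ ∑ j, max (σ j - c) 0 / 2 *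
        ‖(GCᴴ *ᵥ (z ∘ Sum.inl)) j + (VCᴴ *ᵥ (z ∘ Sum.inr)) j‖ ^ 2 :=
      Finset.sum_nonneg fun j _ => by positivity
    linarith
  have eA := fun k => eig_ge M y W hy hW hMW GA VA α hα hα0 hGA hVA (mul_eq_one_comm.1 hVA) c
    (fun z => hA ▸ dil_form_ge A B GC VC σ hσ0 hGC hVC hC c hc z) k
  have eB := fun k => eig_ge M y W hy hW hMW GB VB β hβ hβ0 hGB hVB (mul_eq_one_comm.1 hVB) 0
    (fun z => by rw [← hB, zero_mul, sub_zero]; exact hBle z) k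
  -- The dilation of `B` vanishes on vectors whose second block is zero.
  refine sum_pairs hnp y _ (fun i hi => ?_) fun k i j hi hj => ?_
  · refine le_eigenvalue_of_form M y W hy hW hMW i 0 (LinearMap.funLeft ℂ ℂ Sum.inr)
      (by simp; omega) fun z hz => ?_
    have hz' : z ∘ Sum.inr = 0 := hz
    have := hBle z
    simpa [hz'] using this
  · have a1 := (eA k).1 i hi
    have a2 := (eA k).2 j hj
    have b1 := (eB k).1 i hi
    have b2 := (eB k).2 j hj
    refine max_le ?_ (by linarith)
    rw [sub_le_iff_le_add, abs_le]
    constructor <;> linarith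

end Dilation

/-! ### From weak majorization to symmetric gauge functions -/

/-- Abel summation: a decreasing nonnegative weight pairs nonnegatively with a vector all of whose
partial sums are nonnegative. -/
lemma abel_nonneg : ∀ (p : ℕ) (e w : Fin p → ℝ), Antitone e → (∀ j, 0 ≤ e j) →
    (∀ k, 0 ≤ ∑ j, if j ≤ k then w j else 0) → 0 ≤ ∑ j, e j * w j := by
  intro p
  induction p with
  | zero => intro e w _ _ _; simp
  | succ p ih =>
    intro e w he he0 hw
    have h1 := ih (fun j => e j.castSucc - e (Fin.last p)) (fun j => w j.castSucc)
      (fun i j hij => sub_le_sub_right (he (Fin.castSucc_le_castSucc_iff.2 hij)) _)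
      (fun j => sub_nonneg.2 (he (Fin.le_last _)))
      (fun k => by
        have := hw k.castSucc
        rw [Fin.sum_univ_castSucc] at this
        simpa [Fin.castSucc_le_castSucc_iff, Fin.castSucc_lt_last] using this)
    have h2 : 0 ≤ ∑ j, w j := by
      have := hw (Fin.last p)
      simpa [Fin.le_last] using this
    have h3 : ∑ j, e j * w j = ∑ j : Fin p, (e j.castSucc - e (Fin.last p)) * w j.castSucc +
        e (Fin.last p) * ∑ j, w j := by
      rw [Fin.sum_univ_castSucc, Fin.sum_univ_castSucc]
      simp only [sub_mul, Finset.sum_sub_distrib, mul_add, Finset.mul_sum]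
      ring
    rw [h3]
    exact add_nonneg h1 (mul_nonneg (he0 _) h2)

/-- Under weak majorization of `|d|` by `σ`, a linear functional takes at `d` a value at most the one
it takes at a suitable signed permutation of `σ`, namely one ordered like `|η|`. -/
lemma exists_perm_pairing {p : ℕ} (d σ η : Fin p → ℝ)
    (h : ∀ c : ℝ, 0 ≤ c → ∑ j, max (|d j| - c) 0 ≤ ∑ j, max (σ j - c) 0) (hσ : ∀ j, 0 ≤ σ j) :
    ∃ π : Equiv.Perm (Fin p), ∑ j, η j * d j ≤ ∑ j, |η j| * σ (π j) := by
  let π₁ := Tuple.sort (fun j => -|η j|)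
  let π₂ := Tuple.sort (fun j => -σ j)
  have hη : Antitone fun j => |η (π₁ j)| := fun i j hij =>
    neg_le_neg_iff.1 (Tuple.monotone_sort (fun j => -|η j|) hij)
  have hσa : Antitone fun j => σ (π₂ j) := fun i j hij =>
    neg_le_neg_iff.1 (Tuple.monotone_sort (fun j => -σ j) hij)
  refine ⟨π₁⁻¹.trans π₂, ?_⟩
  have hmain := abel_nonneg p (fun j => |η (π₁ j)|) (fun j => σ (π₂ j) - |d (π₁ j)|) hη
    (fun j => abs_nonneg _) fun k => by
      -- At the level `c = σ (π₂ k)`, only the terms `(σ (π₂ j) - c)⁺` with `j ≤ k` can be nonzero.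
      set c := σ (π₂ k)
      have hd := h c (hσ _)
      rw [← Equiv.sum_comp π₁, ← Equiv.sum_comp π₂ (fun j => max (σ j - c) 0)] at hd
      have h1 : ∑ j, (if j ≤ k then σ (π₂ j) - |d (π₁ j)| else 0) ≥
          ∑ j, (max (σ (π₂ j) - c) 0 - max (|d (π₁ j)| - c) 0) := by
        refine Finset.sum_le_sum fun j _ => ?_
        split_ifs with hj
        · rw [max_eq_left (sub_nonneg.2 (hσa hj))]
          have := le_max_left (|d (π₁ j)| - c) 0
          linarith
        · rw [max_eq_right (sub_nonpos.2 (hσa (not_le.1 hj).le))]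
          have := le_max_right (|d (π₁ j)| - c) 0
          linarith
      rw [Finset.sum_sub_distrib] at h1
      linarith
  rw [← Equiv.sum_comp π₁, ← Equiv.sum_comp π₁ (fun j => |η j| * σ _)]
  simp only [mul_sub, Finset.sum_sub_distrib] at hmain
  have h2 : ∑ j, η (π₁ j) * d (π₁ j) ≤ ∑ j, |η (π₁ j)| * |d (π₁ j)| :=
    Finset.sum_le_sum fun j _ => by rw [← abs_mul]; exact le_abs_self _
  simp
  linarith

/-- A convex positively homogeneous function invariant under signed permutations is monotone for
weak majorization. -/
lemma gauge_le {p : ℕ} (Φ : (Fin p → ℝ) → ℝ) (hadd : ∀ x y, Φ (x + y) ≤ Φ x + Φ y)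
    (hsmul : ∀ (c : ℝ) x, 0 ≤ c → Φ (c • x) = c * Φ x)
    (hsym : ∀ (π : Equiv.Perm (Fin p)) (ε : Fin p → ℤˣ) x,
      Φ (fun j => ((ε j : ℤ) : ℝ) * x (π j)) = Φ x)
    (d σ : Fin p → ℝ)
    (h : ∀ c : ℝ, 0 ≤ c → ∑ j, max (|d j| - c) 0 ≤ ∑ j, max (σ j - c) 0) (hσ : ∀ j, 0 ≤ σ j) :
    Φ d ≤ Φ σ := by
  let S : Set (Fin p → ℝ) := Set.range fun q : Equiv.Perm (Fin p) × (Fin p → ℤˣ) =>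
    fun j => ((q.2 j : ℤ) : ℝ) * σ (q.1 j)
  have hconv : Convex ℝ {x | Φ x ≤ Φ σ} := by
    intro x hx y hy a b ha hb hab
    have h1 := hadd (a • x) (b • y)
    rw [hsmul a x ha, hsmul b y hb] at h1
    have hx' : Φ x ≤ Φ σ := hx
    have hy' : Φ y ≤ Φ σ := hy
    show Φ _ ≤ _
    have : a * Φ σ + b * Φ σ = Φ σ := by rw [← add_mul, hab, one_mul]
    nlinarith [mul_le_mul_of_nonneg_left hx' ha, mul_le_mul_of_nonneg_left hy' hb]
  have hsub : convexHull ℝ S ⊆ {x | Φ x ≤ Φ σ} := by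
    refine convexHull_min ?_ hconv
    rintro _ ⟨q, rfl⟩
    exact (hsym q.1 q.2 σ).le
  apply hsub
  by_contra hd
  obtain ⟨f, u, hf, hu⟩ := geometric_hahn_banach_closed_point (E := Fin p → ℝ) (convex_convexHull ℝ S)
    ((Set.finite_range _).isClosed_convexHull ℝ) hd
  have hfx : ∀ x, f x = ∑ j, f (Pi.single j 1) * x j := fun x => by
    conv_lhs => rw [pi_eq_sum_univ' x]
    rw [map_sum]
    refine Finset.sum_congr rfl fun j _ => ?_
    rw [map_smul, smul_eq_mul, mul_comm]
  obtain ⟨π, hπ⟩ := exists_perm_pairing d σ (fun j => f (Pi.single j 1)) h hσ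
  let ε : Fin p → ℤˣ := fun j => if 0 ≤ f (Pi.single j 1) then 1 else -1
  have h1 := hf _ (subset_convexHull ℝ S ⟨(π, ε), rfl⟩)
  rw [hfx] at h1 hu
  have h2 : ∑ j, f (Pi.single j 1) * (((ε j : ℤ) : ℝ) * σ (π j)) =
      ∑ j, |f (Pi.single j 1)| * σ (π j) := by
    refine Finset.sum_congr rfl fun j _ => ?_
    by_cases hj : 0 ≤ f (Pi.single j 1)
    · simp [ε, hj, abs_of_nonneg]
    · simp [ε, hj, abs_of_neg (not_le.1 hj)]
  have h1' : ∑ j, f (Pi.single j 1) * (((ε j : ℤ) : ℝ) * σ (π j)) < u := h1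
  rw [h2] at h1'
  linarith

/-! ### Rectangular diagonal matrices and singular value decompositions -/

/-- The `n × p` matrix with the real vector `d` on its main diagonal. -/
noncomputable def rect {n p : ℕ} (hnp : p ≤ n) (d : Fin p → ℝ) : Matrix (Fin n) (Fin p) ℂ :=
  Matrix.of fun i j => if i = Fin.castLE hnp j then (d j : ℂ) else 0

section Rect

variable {n p : ℕ} (hnp : p ≤ n)

lemma rect_eq (d : Fin p → ℝ) :
    rect hnp d = rect hnp 1 * diagonal (fun j => (d j : ℂ)) := by
  ext i j
  simp [rect, mul_diagonal]

lemma rect_one_isometry : (rect hnp (1 : Fin p → ℝ))ᴴ * rect hnp 1 = 1 := by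
  ext i j
  simp [rect, mul_apply, one_apply, apply_ite, eq_comm]

lemma rect_perm (d : Fin p → ℝ) (π : Equiv.Perm (Fin p)) :
    ∃ (U : Matrix (Fin n) (Fin n) ℂ) (V : Matrix (Fin p) (Fin p) ℂ), Uᴴ * U = 1 ∧ Vᴴ * V = 1 ∧
      rect hnp (fun j => d (π j)) = U * rect hnp d * Vᴴ := by
  let ρ := π.viaFintypeEmbedding (Fin.castLEEmb hnp)
  have hρ : ∀ j, ρ (Fin.castLE hnp j) = Fin.castLE hnp (π j) := fun j =>
    Equiv.Perm.viaFintypeEmbedding_apply_image π (Fin.castLEEmb hnp) j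
  refine ⟨ρ.permMatrix ℂ, π.permMatrix ℂ, ?_, ?_, ?_⟩
  · rw [conjTranspose_permMatrix, ← permMatrix_mul, mul_inv_cancel, permMatrix_one]
  · rw [conjTranspose_permMatrix, ← permMatrix_mul, mul_inv_cancel, permMatrix_one]
  · have : ρ.permMatrix ℂ * rect hnp d * (π.permMatrix ℂ)ᴴ = (rect hnp d).submatrix ρ π := by
      rw [conjTranspose_permMatrix, PEquiv.toMatrix_toPEquiv_mul, PEquiv.mul_toMatrix_toPEquiv]
      rfl
    rw [this]
    ext i j
    simp [rect, ← hρ]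

/-- Every matrix with at least as many rows as columns has a singular value decomposition: for
`V` diagonalizing `Cᴴ * C`, the columns of `C * V` are orthogonal with squared norms the eigenvalues,
and the nonzero ones, normalized, extend to an orthonormal basis. -/
lemma exists_svd (C : Matrix (Fin n) (Fin p) ℂ) :
    ∃ (U : Matrix (Fin n) (Fin n) ℂ) (V : Matrix (Fin p) (Fin p) ℂ) (σ : Fin p → ℝ),
      Uᴴ * U = 1 ∧ Vᴴ * V = 1 ∧ (∀ j, 0 ≤ σ j) ∧ C = U * rect hnp σ * Vᴴ := by
  obtain ⟨l, V, -, hV, hD, -⟩ := exists_sorted_spectral p (by simp) (Cᴴ * C)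
    (isHermitian_conjTranspose_mul_self C)
  have hK : (C * V)ᴴ * (C * V) = diagonal (fun k => (l k : ℂ)) := by
    rw [← hD, conjTranspose_mul]; simp only [Matrix.mul_assoc]
  set K := C * V
  have hKij : ∀ i j, ∑ r, star (K r i) * K r j = if i = j then (l i : ℂ) else 0 := fun i j => by
    have := congrFun (congrFun hK i) j
    simpa [mul_apply, diagonal_apply] using this
  have hnorm : ∀ j, ∑ r, ‖K r j‖ ^ 2 = l j := fun j => by
    have := congrArg Complex.re (hKij j j)
    rw [if_pos rfl, Complex.ofReal_re, Complex.re_sum] at this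
    rw [← this]
    refine Finset.sum_congr rfl fun r _ => ?_
    simp [Complex.sq_norm, Complex.normSq_apply]
  have hl : ∀ j, 0 ≤ l j := fun j => by
    rw [← hnorm]; exact Finset.sum_nonneg fun _ _ => by positivity
  let v : Fin n → EuclideanSpace ℂ (Fin n) := fun i =>
    if h : (i : ℕ) < p then WithLp.toLp 2 (fun r => K r ⟨i, h⟩ / (√(l ⟨i, h⟩) : ℂ)) else 0
  let s : Set (Fin n) := {i | ∃ h : (i : ℕ) < p, l ⟨i, h⟩ ≠ 0}
  have hs : Orthonormal ℂ (s.domRestrict v) := by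
    rw [orthonormal_iff_ite]
    rintro ⟨i, hi, hi0⟩ ⟨j, hj, hj0⟩
    have hsi : (√(l ⟨i, hi⟩) : ℂ) ≠ 0 := by
      exact_mod_cast (Real.sqrt_ne_zero (hl _)).2 hi0
    have hsj : (√(l ⟨j, hj⟩) : ℂ) ≠ 0 := by
      exact_mod_cast (Real.sqrt_ne_zero (hl _)).2 hj0
    have h1 : inner ℂ (v i) (v j) = (∑ r, star (K r ⟨i, hi⟩) * K r ⟨j, hj⟩) /
        ((√(l ⟨i, hi⟩) : ℂ) * (√(l ⟨j, hj⟩) : ℂ)) := by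
      simp only [v, hi, hj, dif_pos, PiLp.inner_apply, Finset.sum_div]
      refine Finset.sum_congr rfl fun r _ => ?_
      simp
      field_simp
    change inner ℂ (v i) (v j) = _
    rw [h1, hKij]
    by_cases hij : i = j
    · subst hij
      have : (√(l ⟨i, hi⟩) : ℂ) * (√(l ⟨i, hi⟩) : ℂ) = (l ⟨i, hi⟩ : ℂ) := by
        exact_mod_cast Real.mul_self_sqrt (hl _)
      rw [this]
      simp [hi0]
    · have : ¬ ((i : ℕ) = j) := fun h => hij (Fin.ext h)
      simp [this, hij]
  obtain ⟨b, hb⟩ := hs.exists_orthonormalBasis_extension_of_card_eq (by simp)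
  let U : Matrix (Fin n) (Fin n) ℂ := Matrix.of fun i j => b j i
  have hU : Uᴴ * U = 1 := by
    ext i j
    have := orthonormal_iff_ite.1 b.orthonormal i j
    rw [PiLp.inner_apply] at this
    rw [one_apply, ← this]
    simp [U, mul_apply, mul_comm]
  refine ⟨U, V, fun j => √(l j), hU, hV, fun j => Real.sqrt_nonneg _, ?_⟩
  have hKU : K = U * rect hnp (fun j => √(l j)) := by
    ext r j
    have h1 : (U * rect hnp (fun j => √(l j))) r j = b (Fin.castLE hnp j) r * (√(l j) : ℂ) := by
      simp [mul_apply, rect, U]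
    rw [h1]
    by_cases h0 : l j = 0
    · have h2 := (Finset.sum_eq_zero_iff_of_nonneg (fun _ _ => by positivity)).1
        ((hnorm j).trans h0) r (Finset.mem_univ _)
      have h3 : K r j = 0 := by simpa using h2
      simp [h0, h3]
    · have hsj : (√(l j) : ℂ) ≠ 0 := by
        exact_mod_cast (Real.sqrt_ne_zero (hl _)).2 h0
      rw [hb (Fin.castLE hnp j) ⟨j.isLt, h0⟩]
      simp [v, hsj]
  rw [← hKU, Matrix.mul_assoc, mul_eq_one_comm.1 hV, Matrix.mul_one]

end Rect

/-- Mirsky's theorem: if `N` is a unitarily invariant norm on `ℂ^{n×p}` and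
`A`, `B` have singular values `α_1 ≥ … ≥ α_p` and `β_1 ≥ … ≥ β_p` respectively
(exhibited by singular value decompositions), then `N(D) ≤ N(A − B)` where `D` is the
matrix with entries `α_j − β_j` on the diagonal positions and zeros elsewhere. -/
theorem stmt7 (n p : ℕ) (hnp : p ≤ n)
    (N : Matrix (Fin n) (Fin p) ℂ → ℝ)
    (hN0 : ∀ A : Matrix (Fin n) (Fin p) ℂ, N A = 0 ↔ A = 0)
    (hNsmul : ∀ (c : ℂ) (A : Matrix (Fin n) (Fin p) ℂ), N (c • A) = ‖c‖ * N A)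
    (hNadd : ∀ A B : Matrix (Fin n) (Fin p) ℂ, N (A + B) ≤ N A + N B)
    (hNinv : ∀ (U : Matrix (Fin n) (Fin n) ℂ) (V : Matrix (Fin p) (Fin p) ℂ)
      (A : Matrix (Fin n) (Fin p) ℂ), Uᴴ * U = 1 → Vᴴ * V = 1 → N (U * A * Vᴴ) = N A)
    (A B : Matrix (Fin n) (Fin p) ℂ)
    (α β : Fin p → ℝ)
    (hα0 : ∀ j, 0 ≤ α j) (hβ0 : ∀ j, 0 ≤ β j)
    (hαmono : ∀ j k : Fin p, j ≤ k → α k ≤ α j)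
    (hβmono : ∀ j k : Fin p, j ≤ k → β k ≤ β j)
    (UA : Matrix (Fin n) (Fin n) ℂ) (VA : Matrix (Fin p) (Fin p) ℂ)
    (hUA : UAᴴ * UA = 1) (hVA : VAᴴ * VA = 1)
    (hA : A = UA * (Matrix.of fun i j => if i = Fin.castLE hnp j then (α j : ℂ) else 0) * VAᴴ)
    (UB : Matrix (Fin n) (Fin n) ℂ) (VB : Matrix (Fin p) (Fin p) ℂ)
    (hUB : UBᴴ * UB = 1) (hVB : VBᴴ * VB = 1)
    (hB : B = UB * (Matrix.of fun i j => if i = Fin.castLE hnp j then (β j : ℂ) else 0) * VBᴴ) :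
    N (Matrix.of fun i j => if i = Fin.castLE hnp j then ((α j - β j : ℝ) : ℂ) else 0) ≤
      N (A - B) := by
  obtain ⟨U, V, σ, hU, hV, hσ, hC⟩ := exists_svd hnp (A - B)
  have hA' : A = UA * rect hnp α * VAᴴ := hA
  have hB' : B = UB * rect hnp β * VBᴴ := hB
  have hiso : ∀ P : Matrix (Fin n) (Fin n) ℂ, Pᴴ * P = 1 →
      (P * rect hnp 1)ᴴ * (P * rect hnp 1) = 1 := fun P hP => by
    rw [conjTranspose_mul, Matrix.mul_assoc, ← Matrix.mul_assoc Pᴴ, hP, Matrix.one_mul,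
      rect_one_isometry]
  rw [rect_eq, ← Matrix.mul_assoc] at hA' hB' hC
  have hweak := fun c => sum_posPart_sub_le hnp A B _ _ _ VA VB V α β σ (fun i j => hαmono i j) hα0
    (fun i j => hβmono i j) hβ0 hσ (hiso UA hUA) (hiso UB hUB) (hiso U hU) hVA hVB hV hA' hB' hC c
  rw [Matrix.mul_assoc U, ← rect_eq] at hC
  rw [hC, hNinv _ _ _ hU hV]
  refine gauge_le (fun x => N (rect hnp x)) (fun x y => ?_) (fun c x hc => ?_) (fun π ε x => ?_)
    (fun j => α j - β j) σ hweak hσ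
  · have : rect hnp (x + y) = rect hnp x + rect hnp y := by
      ext i j
      by_cases h : i = Fin.castLE hnp j <;> simp [rect, h]
    rw [this]
    exact hNadd _ _
  · have : rect hnp (c • x) = (c : ℂ) • rect hnp x := by
      ext i j
      by_cases h : i = Fin.castLE hnp j <;> simp [rect, h]
    rw [this, hNsmul, Complex.norm_real, Real.norm_of_nonneg hc]
  · obtain ⟨P, Q, hP, hQ, hPQ⟩ := rect_perm hnp x π
    let E : Matrix (Fin p) (Fin p) ℂ := diagonal fun j => ((ε j : ℤ) : ℂ)
    have hEs : Eᴴ = E := by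
      rw [diagonal_conjTranspose]
      congr 1
      ext j
      simp
    have hE : Eᴴ * E = 1 := by
      rw [hEs, diagonal_mul_diagonal, ← diagonal_one]
      congr 1
      ext j
      rcases Int.units_eq_one_or (ε j) with h | h <;> simp [h]
    have h1 : rect hnp (fun j => ((ε j : ℤ) : ℝ) * x (π j)) =
        (1 : Matrix (Fin n) (Fin n) ℂ) * rect hnp (fun j => x (π j)) * Eᴴ := by
      rw [hEs, Matrix.one_mul]
      ext i j
      by_cases h : i = Fin.castLE hnp j <;> simp [rect, h, E, mul_diagonal, mul_comm]
    rw [h1, hNinv 1 E _ (by simp) hE, hPQ, hNinv _ _ _ hP hQ]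
end

section
/- (Schmidt–Mirsky theorem) Let Φ be a symmetric gauge function on ℝ^p, i.e. a norm on ℝ^p invariant under permutations of the coordinates and under sign changes of the coordinates, and let ‖A‖_Φ = Φ(σ_1(A), …, σ_p(A)) be the associated unitarily invariant norm on ℂ^{n×p} (n ≥ p), where σ_1(A) ≥ … ≥ σ_p(A) are the singular values of A. Let A ∈ ℂ^{n×p} and let B ∈ ℂ^{n×p} have rank B ≤ r < p. Then ‖A − B‖_Φ ≥ Φ(0, …, 0, σ_{r+1}(A), …, σ_p(A)). Moreover, if A = UΣV* is a singular value decomposition of A, equality is attained by A_r = UΣ_rV*, where Σ_r is obtained from Σ by setting to zero all singular values beyond the r-th; hence A_r is a best rank-r approximation of A for the norm ‖·‖_Φ. -/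
/-!
The Mirsky bound follows from the Weyl-type inequalities `σ_{r+i}(A) ≤ σ_i(A - B)` for
`rank B ≤ r`, because a symmetric gauge function is monotone on the nonnegative orthant and
invariant under the cyclic shift taking `(0, …, 0, σ_{r+1}, …, σ_p)` to
`(σ_{r+1}, …, σ_p, 0, …, 0)`.

The inequalities come from the Courant–Fischer dimension count in `singular_le_of_rank`: in the
kernel of the difference of two matrices there is a nonzero vector avoiding prescribed right
singular directions of both, as long as there are few enough of them; on it the two matrices agree,
one stretches by at least `a`, the other by at most `b`. The lemma does not require the singular
values to be sorted, so it also bounds the singular values of `A - A_r`, whose natural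
decomposition has the zeros first; this gives the equality case.

Monotonicity (`symmGauge_mono`) is proved one coordinate at a time: shrinking a coordinate is a convex
combination of the vector and its reflection in that coordinate.
-/

open Matrix BigOperators

/-! ### Singular value inequalities -/

/-- The `n × p` matrix with `s` on its main diagonal, the middle factor of a singular value
decomposition. -/
def rectDiag {n p : ℕ} (hnp : p ≤ n) (s : Fin p → ℝ) : Matrix (Fin n) (Fin p) ℂ :=
  Matrix.of fun i j => if i = Fin.castLE hnp j then (s j : ℂ) else 0

lemma rectDiag_gram {n p : ℕ} (hnp : p ≤ n) (s : Fin p → ℝ) :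
    (rectDiag hnp s)ᴴ * rectDiag hnp s = diagonal fun j => ((s j ^ 2 : ℝ) : ℂ) := by
  ext j k
  rw [Matrix.mul_apply, Matrix.diagonal_apply, Finset.sum_eq_single (Fin.castLE hnp j)]
  · by_cases h : j = k
    · subst h; simp [rectDiag, pow_two]
    · simp [rectDiag, h]
  · intro i _ hi
    simp [rectDiag, hi]
  · simp

lemma star_dotProduct_self {ι : Type*} [Fintype ι] (y : ι → ℂ) :
    star y ⬝ᵥ y = ((∑ j, ‖y j‖ ^ 2 : ℝ) : ℂ) := by
  simp only [dotProduct, Pi.star_apply, RCLike.star_def, Complex.conj_mul']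
  push_cast
  rfl

lemma sum_norm_sq_unitary {p : ℕ} {V : Matrix (Fin p) (Fin p) ℂ} (hV : Vᴴ * V = 1)
    (x : Fin p → ℂ) : ∑ j, ‖(Vᴴ *ᵥ x) j‖ ^ 2 = ∑ j, ‖x j‖ ^ 2 := by
  have hV' : V * Vᴴ = 1 := mul_eq_one_comm.mp hV
  have h : star (Vᴴ *ᵥ x) ⬝ᵥ (Vᴴ *ᵥ x) = star x ⬝ᵥ x := by
    rw [star_mulVec, conjTranspose_conjTranspose, ← dotProduct_mulVec, mulVec_mulVec, hV',
      one_mulVec]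
  rw [star_dotProduct_self, star_dotProduct_self] at h
  exact_mod_cast h

/-- The squared norm of `X x`, where `X = U diag(s) V*`, in the coordinates of `x` along the 
right singular vectors of `X`. -/
lemma sum_norm_sq_svd {n p : ℕ} (hnp : p ≤ n) (s : Fin p → ℝ)
    {U : Matrix (Fin n) (Fin n) ℂ} (V : Matrix (Fin p) (Fin p) ℂ) (hU : Uᴴ * U = 1)
    (x : Fin p → ℂ) :
    ∑ i, ‖((U * rectDiag hnp s * Vᴴ) *ᵥ x) i‖ ^ 2 = ∑ j, s j ^ 2 * ‖(Vᴴ *ᵥ x) j‖ ^ 2 := by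
  set y := Vᴴ *ᵥ x with hy
  have hX : (U * rectDiag hnp s * Vᴴ) *ᵥ x = (U * rectDiag hnp s) *ᵥ y := by
    rw [hy, mulVec_mulVec]
  have hG : (U * rectDiag hnp s)ᴴ * (U * rectDiag hnp s) =
      diagonal fun j => ((s j ^ 2 : ℝ) : ℂ) := by
    rw [conjTranspose_mul, Matrix.mul_assoc, ← Matrix.mul_assoc Uᴴ, hU, Matrix.one_mul,
      rectDiag_gram]
  have h := star_dotProduct_self ((U * rectDiag hnp s) *ᵥ y)
  rw [star_mulVec, ← dotProduct_mulVec, mulVec_mulVec, hG] at h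
  rw [hX]
  have h2 : star y ⬝ᵥ ((diagonal fun j => ((s j ^ 2 : ℝ) : ℂ)) *ᵥ y) =
      ((∑ j, s j ^ 2 * ‖y j‖ ^ 2 : ℝ) : ℂ) := by
    simp only [dotProduct, mulVec_diagonal, Pi.star_apply, RCLike.star_def]
    push_cast
    refine Finset.sum_congr rfl fun j _ => ?_
    rw [← Complex.conj_mul']
    ring
  rw [h2] at h
  exact_mod_cast h.symm

/-- The Courant–Fischer dimension count: with `X = U diag(s) V*` and `Y = U' diag(t) V'* = X - C`,
the kernel of `C`, the span of the columns of `V` indexed by `S` and that of the columns of `V'`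
indexed by `T` have a common nonzero vector `x`, and there `‖X x‖ ≥ a ‖x‖` while `‖Y x‖ ≤ b ‖x‖`. -/
lemma singular_le_of_rank {n p : ℕ} (hnp : p ≤ n) (s t : Fin p → ℝ)
    {U U' : Matrix (Fin n) (Fin n) ℂ} {V V' : Matrix (Fin p) (Fin p) ℂ}
    (hU : Uᴴ * U = 1) (hV : Vᴴ * V = 1) (hU' : U'ᴴ * U' = 1) (hV' : V'ᴴ * V' = 1)
    (C : Matrix (Fin n) (Fin p) ℂ)
    (hC : U * rectDiag hnp s * Vᴴ - C = U' * rectDiag hnp t * V'ᴴ)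
    (S T : Finset (Fin p)) (a b : ℝ) (ha : 0 ≤ a) (hb : 0 ≤ b)
    (hS : ∀ j ∈ S, a ≤ s j) (hT : ∀ j ∈ T, |t j| ≤ b)
    (hcard : C.rank + Sᶜ.card + Tᶜ.card < p) : a ≤ b := by
  classical
  obtain ⟨x, hx0, hCx, hSx, hTx⟩ : ∃ x : Fin p → ℂ, x ≠ 0 ∧ C *ᵥ x = 0 ∧
      (∀ j ∉ S, (Vᴴ *ᵥ x) j = 0) ∧ ∀ j ∉ T, (V'ᴴ *ᵥ x) j = 0 := by
    let K := LinearMap.ker C.mulVecLin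
    let f : (Fin p → ℂ) →ₗ[ℂ] ({j // j ∈ Sᶜ} → ℂ) × ({j // j ∈ Tᶜ} → ℂ) :=
      ((LinearMap.funLeft ℂ ℂ Subtype.val).comp Vᴴ.mulVecLin).prod
        ((LinearMap.funLeft ℂ ℂ Subtype.val).comp V'ᴴ.mulVecLin)
    have hK : C.rank + Module.finrank ℂ K = p := by
      have h := C.mulVecLin.finrank_range_add_finrank_ker
      rwa [Module.finrank_fin_fun] at h
    have hlt : Module.finrank ℂ (({j // j ∈ Sᶜ} → ℂ) × ({j // j ∈ Tᶜ} → ℂ)) <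
        Module.finrank ℂ K := by
      rw [Module.finrank_prod, Module.finrank_fintype_fun_eq_card,
        Module.finrank_fintype_fun_eq_card, Fintype.card_coe, Fintype.card_coe]
      omega
    obtain ⟨x, hx, hx0⟩ := Submodule.exists_mem_ne_zero_of_ne_bot
      (LinearMap.ker_ne_bot_of_finrank_lt (f := f.comp K.subtype) hlt)
    have hfx : f x = 0 := hx
    refine ⟨x, fun h => hx0 (Subtype.ext h), x.2, fun j hj => ?_, fun j hj => ?_⟩
    · exact congrFun (congrArg Prod.fst hfx) ⟨j, Finset.mem_compl.mpr hj⟩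
    · exact congrFun (congrArg Prod.snd hfx) ⟨j, Finset.mem_compl.mpr hj⟩
  have hXY : (U * rectDiag hnp s * Vᴴ) *ᵥ x = (U' * rectDiag hnp t * V'ᴴ) *ᵥ x := by
    rw [← hC, sub_mulVec, hCx, sub_zero]
  have hpos : 0 < ∑ j, ‖x j‖ ^ 2 := by
    obtain ⟨j, hj⟩ := Function.ne_iff.mp hx0
    exact Finset.sum_pos' (fun _ _ => by positivity)
      ⟨j, Finset.mem_univ j, pow_pos (norm_pos_iff.mpr hj) 2⟩
  have hlow : a ^ 2 * ∑ j, ‖x j‖ ^ 2 ≤ ∑ i, ‖((U * rectDiag hnp s * Vᴴ) *ᵥ x) i‖ ^ 2 := by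
    rw [sum_norm_sq_svd hnp s V hU, ← sum_norm_sq_unitary hV, Finset.mul_sum]
    refine Finset.sum_le_sum fun j _ => ?_
    by_cases hj : j ∈ S
    · have := hS j hj
      gcongr
    · simp [hSx j hj]
  have hupp : ∑ i, ‖((U' * rectDiag hnp t * V'ᴴ) *ᵥ x) i‖ ^ 2 ≤ b ^ 2 * ∑ j, ‖x j‖ ^ 2 := by
    rw [sum_norm_sq_svd hnp t V' hU', ← sum_norm_sq_unitary hV', Finset.mul_sum]
    refine Finset.sum_le_sum fun j _ => ?_
    by_cases hj : j ∈ T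
    · have h := sq_le_sq' (by linarith [neg_le_of_abs_le (hT j hj)]) (le_of_abs_le (hT j hj))
      gcongr
    · simp [hTx j hj]
  rw [← hXY] at hupp
  have hab : a ^ 2 ≤ b ^ 2 := le_of_mul_le_mul_right (hlow.trans hupp) hpos
  exact (sq_le_sq₀ ha hb).mp hab

/-! ### Symmetric gauge functions -/

/-- Shrinking one nonnegative coordinate does not increase a seminorm that is invariant under sign
changes. -/
lemma gauge_update_le {p : ℕ} (Φ : (Fin p → ℝ) → ℝ)
    (hΦsmul : ∀ (c : ℝ) (x : Fin p → ℝ), Φ (c • x) = |c| * Φ x)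
    (hΦadd : ∀ x y : Fin p → ℝ, Φ (x + y) ≤ Φ x + Φ y)
    (hΦsign : ∀ e : Fin p → ℝ, (∀ j, e j = 1 ∨ e j = -1) →
      ∀ x : Fin p → ℝ, Φ (fun j => e j * x j) = Φ x)
    (z : Fin p → ℝ) (j : Fin p) (a : ℝ) (ha : 0 ≤ a) (haz : a ≤ z j) :
    Φ (Function.update z j a) ≤ Φ z := by
  rcases (ha.trans haz).eq_or_lt with h0 | hpos
  · have : a = z j := by linarith
    rw [this, Function.update_eq_self]
  · obtain ⟨t, ht0, ht1, rfl⟩ : ∃ t : ℝ, 0 ≤ t ∧ t ≤ 1 ∧ a = t * z j :=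
      ⟨a / z j, by positivity, (div_le_one hpos).mpr haz, by field_simp⟩
    set e : Fin p → ℝ := fun k => if k = j then -1 else 1 with he
    have hdec : Function.update z j (t * z j) =
        ((1 + t) / 2) • z + ((1 - t) / 2) • (fun k => e k * z k) := by
      ext k
      by_cases hk : k = j
      · subst hk; simp [he]; ring
      · simp [he, hk]; ring
    have hs := hΦsign e (fun k => by by_cases hk : k = j <;> simp [he, hk]) z
    have h := hΦadd (((1 + t) / 2) • z) (((1 - t) / 2) • (fun k => e k * z k))
    rw [← hdec, hΦsmul, hΦsmul, hs, abs_of_nonneg (by linarith), abs_of_nonneg (by linarith)] at h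
    linarith

lemma symmGauge_mono {p : ℕ} (Φ : (Fin p → ℝ) → ℝ)
    (hΦsmul : ∀ (c : ℝ) (x : Fin p → ℝ), Φ (c • x) = |c| * Φ x)
    (hΦadd : ∀ x y : Fin p → ℝ, Φ (x + y) ≤ Φ x + Φ y)
    (hΦsign : ∀ e : Fin p → ℝ, (∀ j, e j = 1 ∨ e j = -1) →
      ∀ x : Fin p → ℝ, Φ (fun j => e j * x j) = Φ x)
    (x y : Fin p → ℝ) (hx : ∀ j, 0 ≤ x j) (hxy : ∀ j, x j ≤ y j) : Φ x ≤ Φ y := by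
  have key : ∀ S : Finset (Fin p), Φ (fun j => if j ∈ S then x j else y j) ≤ Φ y := by
    intro S
    induction S using Finset.induction_on with
    | empty => simp
    | insert j S hj ih =>
      refine le_trans ?_ ih
      have h := gauge_update_le Φ hΦsmul hΦadd hΦsign
        (fun k => if k ∈ S then x k else y k) j (x j) (hx j) (by simpa [hj] using hxy j)
      have hu : (fun k => if k ∈ insert j S then x k else y k) =
          Function.update (fun k => if k ∈ S then x k else y k) j (x j) := by
        ext k
        by_cases hk : k = j
        · subst hk; simp
        · simp [hk]
      rw [hu]
      exact h
  simpa using key Finset.univ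

/-- The tail `(0, …, 0, σ_{r+1}, …, σ_p)` moved to the front by a cyclic shift. -/
lemma gauge_tail_eq {p r : ℕ} (hrp : r < p) (Φ : (Fin p → ℝ) → ℝ)
    (hΦperm : ∀ (π : Equiv.Perm (Fin p)) (x : Fin p → ℝ), Φ (x ∘ π) = Φ x) (σ : Fin p → ℝ) :
    Φ (fun i : Fin p => if h : (i : ℕ) + r < p then σ ⟨i + r, h⟩ else 0) =
      Φ (fun j => if (j : ℕ) < r then 0 else σ j) := by
  have : NeZero p := ⟨by omega⟩
  rw [← hΦperm (Equiv.addRight (⟨r, hrp⟩ : Fin p)) (fun j => if (j : ℕ) < r then 0 else σ j)]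
  congr 1
  ext i
  have hv : ((i + ⟨r, hrp⟩ : Fin p) : ℕ) = (i + r) % p := Fin.val_add _ _
  have hi := i.2
  simp only [Function.comp_apply, Equiv.coe_addRight]
  by_cases h : (i : ℕ) + r < p
  · rw [Nat.mod_eq_of_lt h] at hv
    rw [dif_pos h, if_neg (by omega)]
    congr 1
    exact Fin.ext hv.symm
  · rw [Nat.mod_eq_sub_mod (by omega), Nat.mod_eq_of_lt (by omega)] at hv
    rw [dif_neg h, if_pos (by omega)]

/-! ### Truncation and the theorem -/

lemma card_filter_val_lt {p : ℕ} (k : ℕ) :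
    (Finset.univ.filter fun j : Fin p => (j : ℕ) < k).card ≤ k := by
  calc (Finset.univ.filter fun j : Fin p => (j : ℕ) < k).card ≤ (Finset.range k).card :=
        Finset.card_le_card_of_injOn (fun j : Fin p => (j : ℕ))
          (fun j hj => by simpa using hj) (Fin.val_injective.injOn)
    _ = k := Finset.card_range k

lemma rank_truncation_le {n p r : ℕ} (hnp : p ≤ n) (σ : Fin p → ℝ)
    (U : Matrix (Fin n) (Fin n) ℂ) (V : Matrix (Fin p) (Fin p) ℂ) :
    (U * (Matrix.of fun i j =>
      if i = Fin.castLE hnp j ∧ (j : ℕ) < r then (σ j : ℂ) else 0) * Vᴴ).rank ≤ r := by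
  classical
  set D : Matrix (Fin n) (Fin p) ℂ := Matrix.of fun i j =>
      if i = Fin.castLE hnp j ∧ (j : ℕ) < r then (σ j : ℂ) else 0 with hD
  -- `D` factors through the coordinate projection onto the first `r` coordinates.
  set P : Matrix (Fin p) (Fin p) ℂ := diagonal fun j => if (j : ℕ) < r then 1 else 0 with hP
  have hDP : D = D * P := by
    ext i j
    rw [hP, mul_diagonal]
    by_cases hj : (j : ℕ) < r <;> simp [hD, hj]
  calc (U * D * Vᴴ).rank ≤ (U * D).rank := rank_mul_le_left _ _
    _ ≤ D.rank := rank_mul_le_right _ _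
    _ ≤ P.rank := by rw [hDP]; exact rank_mul_le_right _ _
    _ ≤ r := by
      rw [hP, rank_diagonal, Fintype.card_subtype]
      simpa using card_filter_val_lt (p := p) r

/-- Schmidt–Mirsky theorem: let `Φ` be a symmetric gauge function on `ℝ^p` and
`‖M‖_Φ = Φ(singular values of M)` the associated unitarily invariant norm on `ℂ^{n×p}`.
If `A` has singular values `σ_1 ≥ … ≥ σ_p` (via an SVD `A = UΣV*`) and `B` has rank
at most `r < p`, then `‖A − B‖_Φ ≥ Φ(0,…,0,σ_{r+1},…,σ_p)` (the norm of `A − B` being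
expressed through the singular values `τ` of any SVD of `A − B`). Equality is attained
by `A_r = UΣ_rV*`, obtained by zeroing all singular values beyond the `r`-th, which has
rank at most `r`; hence `A_r` is a best rank-`r` approximation of `A` for `‖·‖_Φ`. -/
theorem stmt8 (n p : ℕ) (hnp : p ≤ n) (r : ℕ) (hrp : r < p)
    (Φ : (Fin p → ℝ) → ℝ)
    (hΦ0 : ∀ x : Fin p → ℝ, Φ x = 0 ↔ x = 0)
    (hΦsmul : ∀ (c : ℝ) (x : Fin p → ℝ), Φ (c • x) = |c| * Φ x)
    (hΦadd : ∀ x y : Fin p → ℝ, Φ (x + y) ≤ Φ x + Φ y)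
    (hΦperm : ∀ (π : Equiv.Perm (Fin p)) (x : Fin p → ℝ), Φ (x ∘ π) = Φ x)
    (hΦsign : ∀ e : Fin p → ℝ, (∀ j, e j = 1 ∨ e j = -1) →
      ∀ x : Fin p → ℝ, Φ (fun j => e j * x j) = Φ x)
    (A : Matrix (Fin n) (Fin p) ℂ) (σ : Fin p → ℝ)
    (hσ0 : ∀ j, 0 ≤ σ j) (hσmono : ∀ j k : Fin p, j ≤ k → σ k ≤ σ j)
    (U : Matrix (Fin n) (Fin n) ℂ) (V : Matrix (Fin p) (Fin p) ℂ)
    (hU : Uᴴ * U = 1) (hV : Vᴴ * V = 1)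
    (hA : A = U * (Matrix.of fun i j => if i = Fin.castLE hnp j then (σ j : ℂ) else 0) * Vᴴ) :
    (∀ B : Matrix (Fin n) (Fin p) ℂ, B.rank ≤ r →
      ∀ (τ : Fin p → ℝ) (U' : Matrix (Fin n) (Fin n) ℂ) (V' : Matrix (Fin p) (Fin p) ℂ),
        (∀ j, 0 ≤ τ j) → (∀ j k : Fin p, j ≤ k → τ k ≤ τ j) →
        U'ᴴ * U' = 1 → V'ᴴ * V' = 1 →
        A - B = U' * (Matrix.of fun i j => if i = Fin.castLE hnp j then (τ j : ℂ) else 0) * V'ᴴ →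
        Φ (fun j => if (j : ℕ) < r then 0 else σ j) ≤ Φ τ) ∧
    ((U * (Matrix.of fun i j =>
        if i = Fin.castLE hnp j ∧ (j : ℕ) < r then (σ j : ℂ) else 0) * Vᴴ).rank ≤ r ∧
      ∀ (τ : Fin p → ℝ) (U' : Matrix (Fin n) (Fin n) ℂ) (V' : Matrix (Fin p) (Fin p) ℂ),
        (∀ j, 0 ≤ τ j) → (∀ j k : Fin p, j ≤ k → τ k ≤ τ j) →
        U'ᴴ * U' = 1 → V'ᴴ * V' = 1 →
        A - U * (Matrix.of fun i j =>
            if i = Fin.castLE hnp j ∧ (j : ℕ) < r then (σ j : ℂ) else 0) * Vᴴ =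
          U' * (Matrix.of fun i j => if i = Fin.castLE hnp j then (τ j : ℂ) else 0) * V'ᴴ →
        Φ τ = Φ (fun j => if (j : ℕ) < r then 0 else σ j)) := by
  have htail_nonneg : ∀ i : Fin p,
      0 ≤ (if h : (i : ℕ) + r < p then σ ⟨i + r, h⟩ else 0) := fun i => by
    split_ifs
    · exact hσ0 _
    · exact le_rfl
  have hlower : ∀ B : Matrix (Fin n) (Fin p) ℂ, B.rank ≤ r →
      ∀ (τ : Fin p → ℝ) (U' : Matrix (Fin n) (Fin n) ℂ) (V' : Matrix (Fin p) (Fin p) ℂ),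
        (∀ j, 0 ≤ τ j) → (∀ j k : Fin p, j ≤ k → τ k ≤ τ j) →
        U'ᴴ * U' = 1 → V'ᴴ * V' = 1 →
        A - B = U' * (Matrix.of fun i j => if i = Fin.castLE hnp j then (τ j : ℂ) else 0) * V'ᴴ →
        Φ (fun j => if (j : ℕ) < r then 0 else σ j) ≤ Φ τ := by
    intro B hB τ U' V' hτ0 hτmono hU' hV' hAB
    rw [← gauge_tail_eq hrp Φ hΦperm σ]
    refine symmGauge_mono Φ hΦsmul hΦadd hΦsign _ _ htail_nonneg fun i => ?_
    split_ifs with h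
    · rw [hA] at hAB
      -- Leading `i + r + 1` directions of `A` against trailing `p - i` directions of `A - B`.
      refine singular_le_of_rank hnp σ τ hU hV hU' hV' B hAB
        (Finset.Iic ⟨i + r, h⟩) (Finset.Ici i) _ _ (hσ0 _) (hτ0 _)
        (fun j hj => hσmono _ _ (Finset.mem_Iic.mp hj))
        (fun j hj => ?_) ?_
      · rw [abs_of_nonneg (hτ0 j)]
        exact hτmono _ _ (Finset.mem_Ici.mp hj)
      · rw [Finset.card_compl, Finset.card_compl, Fin.card_Iic, Fin.card_Ici, Fintype.card_fin]
        have := i.2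
        dsimp only
        omega
    · exact hτ0 i
  refine ⟨hlower, rank_truncation_le hnp σ U V, ?_⟩
  intro τ U' V' hτ0 hτmono hU' hV' hAr
  refine le_antisymm ?_ (hlower _ (rank_truncation_le hnp σ U V) τ U' V' hτ0 hτmono hU' hV' hAr)
  rw [← gauge_tail_eq hrp Φ hΦperm σ]
  refine symmGauge_mono Φ hΦsmul hΦadd hΦsign _ _ hτ0 fun i => ?_
  have hres : A - U * (Matrix.of fun i j =>
      if i = Fin.castLE hnp j ∧ (j : ℕ) < r then (σ j : ℂ) else 0) * Vᴴ =
      U * rectDiag hnp (fun j => if (j : ℕ) < r then 0 else σ j) * Vᴴ := by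
    rw [hA, ← Matrix.sub_mul, ← Matrix.mul_sub]
    congr 2
    ext i j
    by_cases hi : i = Fin.castLE hnp j <;> by_cases hj : (j : ℕ) < r <;>
      simp [rectDiag, hi, hj]
  -- Leading `i + 1` directions for `τ` against all directions outside `[r, r + i)`, on which the
  -- unsorted singular values of `A - A_r` are at most the `i`-th entry of the shifted tail.
  refine singular_le_of_rank hnp τ (fun j => if (j : ℕ) < r then 0 else σ j)
    hU' hV' hU hV 0 (by rw [sub_zero, ← hres]; exact hAr.symm) (Finset.Iic i)
    (Finset.univ.filter fun j : Fin p => r ≤ (j : ℕ) ∧ (j : ℕ) < i + r)ᶜ _ _ (hτ0 i)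
    (htail_nonneg i) (fun j hj => hτmono _ _ (Finset.mem_Iic.mp hj)) (fun j hj => ?_) ?_
  · by_cases hj' : (j : ℕ) < r
    · simpa [hj'] using htail_nonneg i
    · have hji : (i : ℕ) + r ≤ j := by
        simp only [Finset.mem_compl, Finset.mem_filter, Finset.mem_univ, true_and] at hj
        omega
      have hlt : (i : ℕ) + r < p := by omega
      rw [if_neg hj', dif_pos hlt, abs_of_nonneg (hσ0 j)]
      exact hσmono _ _ hji
  · have hc : (Finset.univ.filter fun j : Fin p => r ≤ (j : ℕ) ∧ (j : ℕ) < i + r).card ≤ i := by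
      calc (Finset.univ.filter fun j : Fin p => r ≤ (j : ℕ) ∧ (j : ℕ) < i + r).card
          ≤ (Finset.Ico r (i + r)).card :=
            Finset.card_le_card_of_injOn (fun j : Fin p => (j : ℕ))
              (fun j hj => by simpa using hj) (Fin.val_injective.injOn)
        _ = i := by simp
    rw [compl_compl, Matrix.rank_zero, Finset.card_compl, Fin.card_Iic, Fintype.card_fin]
    have := i.2
    omega
end
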